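/- Let E_4' ∈ ℝ^{4×2} be the matrix with rows (−1, 0), (cos(2π/3), sin(2π/3)), √(2·sin(π/12))·(cos(3π/8), sin(3π/8)), and √(2·sin(π/12))·(cos(7π/24), sin(7π/24)). Then β_{E_4'} = min{β_M : M ∈ ℝ^{4×2}} = √(1 + √2/2 + √6/2) ≈ 1.71, while the harmonic frame E_4 satisfies β_{E_4} = √(2 + √2) ≈ 1.84 > β_{E_4'}. -/

import Mathlib

noncomputable section

open Real
open scoped RealInnerProductSpace ENNReal

/-- ℝ² as a Euclidean space. -/
abbrev E2 : Type := EuclideanSpace ℝ (Fin 2)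

/-- The vector `(x, y)` in ℝ². -/
def vec2 (x y : ℝ) : E2 := (WithLp.equiv 2 (Fin 2 → ℝ)).symm ![x, y]

/-- The coordinates of a vector in ℝ². -/
def toFun2 (v : E2) : Fin 2 → ℝ := WithLp.equiv 2 (Fin 2 → ℝ) v

/-- The phaseless measurement map `Φ_A(x) = (|⟨a_j, x⟩|)_j`. -/
def PhiMap {m : ℕ} (a : Fin m → E2) (x : E2) : EuclideanSpace ℝ (Fin m) :=
  (WithLp.equiv 2 (Fin m → ℝ)).symm fun j => |⟪a j, x⟫|

/-- The distance `dist(x,y) = min ‖x − y‖ ‖x + y‖` (real phase retrieval distance). -/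
def pdist (x y : E2) : ℝ := min ‖x - y‖ ‖x + y‖

/-- The set of Lipschitz ratios of the phaseless measurement map. -/
def ratioSet {m : ℕ} (a : Fin m → E2) : Set ℝ :=
  {r | ∃ x y : E2, pdist x y ≠ 0 ∧ r = ‖PhiMap a x - PhiMap a y‖ / pdist x y}

/-- The optimal lower Lipschitz constant `L_A`. -/
def lipL {m : ℕ} (a : Fin m → E2) : ℝ := sInf (ratioSet a)

/-- The optimal upper Lipschitz constant `U_A`. -/
def lipU {m : ℕ} (a : Fin m → E2) : ℝ := sSup (ratioSet a)

/-- The condition number `β_A = U_A / L_A`, with `β_A = +∞` when `L_A = 0`. -/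
def condNum {m : ℕ} (a : Fin m → E2) : ℝ≥0∞ :=
  if lipL a = 0 then ⊤ else ENNReal.ofReal (lipU a / lipL a)

/-- An edge family: nonzero vectors with pairwise distinct directions summing to zero
(the edge vectors of a strictly convex polygon). -/
def IsEdgeFamily {m : ℕ} (e : Fin m → E2) : Prop :=
  (∀ j, e j ≠ 0) ∧
  (∀ i j : Fin m, i ≠ j → ‖e i‖⁻¹ • e i ≠ ‖e j‖⁻¹ • e j) ∧
  ∑ j, e j = 0

/-- The diameter-to-perimeter ratio of the polygon with edge vectors `e`. -/
def rRatio {m : ℕ} (e : Fin m → E2) : ℝ :=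
  sSup {s | ∃ u : E2, ‖u‖ = 1 ∧ s = ∑ j, |⟪e j, u⟫|} / (2 * ∑ j, ‖e j‖)

/-- An optimal edge family: minimizes `rRatio` among all edge families of size `m`. -/
def IsOptimalEdgeFamily {m : ℕ} (e : Fin m → E2) : Prop :=
  IsEdgeFamily e ∧ ∀ e' : Fin m → E2, IsEdgeFamily e' → rRatio e ≤ rRatio e'

/-- The complex square map on ℝ² ≅ ℂ: `f(t·(cos φ, sin φ)) = t²·(cos 2φ, sin 2φ)`. -/
def csq (v : E2) : E2 :=
  vec2 (toFun2 v 0 ^ 2 - toFun2 v 1 ^ 2) (2 * toFun2 v 0 * toFun2 v 1)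

/-- The harmonic frame `E_m`: the `j`-th row is `(cos((j−1)π/m), sin((j−1)π/m))`, `j = 1,…,m`. -/
def harmonicFrame (m : ℕ) : Fin m → E2 :=
  fun j => vec2 (Real.cos ((j : ℕ) * π / m)) (Real.sin ((j : ℕ) * π / m))


/-- The frame `E_4'` from the paper: rows `(−1,0)`, `(cos(2π/3), sin(2π/3))`,
`√(2 sin(π/12))·(cos(3π/8), sin(3π/8))`, `√(2 sin(π/12))·(cos(7π/24), sin(7π/24))`. -/
def E4' : Fin 4 → E2 :=
  ![vec2 (-1) 0,
    vec2 (Real.cos (2 * π / 3)) (Real.sin (2 * π / 3)),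
    Real.sqrt (2 * Real.sin (π / 12)) • vec2 (Real.cos (3 * π / 8)) (Real.sin (3 * π / 8)),
    Real.sqrt (2 * Real.sin (π / 12)) • vec2 (Real.cos (7 * π / 24)) (Real.sin (7 * π / 24))]


/-- sum of distances to the ends of a segment grows when moving away from the segment -/
lemma ext_lem (A C O D D' : ℂ) (hO : O ∈ segment ℝ A C) (hD : D ∈ segment ℝ O D') :
    ‖A - D‖ + ‖C - D‖ ≤ ‖A - D'‖ + ‖C - D'‖ := by
  obtain ⟨s, t, hs, ht, hst, rfl⟩ := hO
  obtain ⟨k, l, hk, hl, hkl, rfl⟩ := hD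
  have hOA : ‖A - (s • A + t • C)‖ = t * ‖A - C‖ := by
    have : A - (s • A + t • C) = t • (A - C) := by
      have : s = 1 - t := by linarith
      subst this; module
    rw [this, norm_smul, Real.norm_of_nonneg ht]
  have hOC : ‖C - (s • A + t • C)‖ = s * ‖A - C‖ := by
    have : C - (s • A + t • C) = s • (C - A) := by
      have : t = 1 - s := by linarith
      subst this; module
    rw [this, norm_smul, Real.norm_of_nonneg hs, norm_sub_rev]
  set O := s • A + t • C
  have e1 : ∀ X : ℂ, ‖X - (k • O + l • D')‖ ≤ k * ‖X - O‖ + l * ‖X - D'‖ := by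
    intro X
    have : X - (k • O + l • D') = k • (X - O) + l • (X - D') := by
      have : k = 1 - l := by linarith
      subst this; module
    rw [this]
    refine (norm_add_le _ _).trans ?_
    rw [norm_smul, norm_smul, Real.norm_of_nonneg hk, Real.norm_of_nonneg hl]
  have h3 : ‖A - C‖ ≤ ‖A - D'‖ + ‖C - D'‖ := by
    calc ‖A - C‖ = ‖(A - D') - (C - D')‖ := by congr 1; ring
      _ ≤ _ := norm_sub_le _ _
  have h1 := e1 A
  have h2 := e1 C
  have : ‖A - O‖ + ‖C - O‖ = ‖A - C‖ := by
    rw [hOA, hOC]; rw [← add_mul, add_comm t s, hst, one_mul]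
  have h4 : k * (‖A - O‖ + ‖C - O‖) ≤ k * (‖A - D'‖ + ‖C - D'‖) := by
    rw [this]; gcongr
  have h5 : k = 1 - l := by linarith
  subst h5
  nlinarith

lemma norm_exp_sub (a b : ℝ) (h1 : b ≤ a) (h2 : a ≤ b + 2 * π) :
    ‖Complex.exp (a * Complex.I) - Complex.exp (b * Complex.I)‖ = 2 * sin ((a - b) / 2) := by
  have h0 : 0 ≤ sin ((a - b) / 2) := sin_nonneg_of_nonneg_of_le_pi (by linarith) (by linarith)
  have : ‖Complex.exp (a * Complex.I) - Complex.exp (b * Complex.I)‖ ^ 2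
      = (2 * sin ((a - b) / 2)) ^ 2 := by
    rw [← Complex.normSq_eq_norm_sq, Complex.normSq_apply]
    simp only [Complex.sub_re, Complex.sub_im, Complex.exp_ofReal_mul_I_re,
      Complex.exp_ofReal_mul_I_im]
    have hh : cos (a - b) = 1 - 2 * sin ((a - b) / 2) ^ 2 := by
      have := Real.cos_two_mul ((a - b) / 2)
      rw [show 2 * ((a - b) / 2) = a - b by ring] at this
      rw [this]; nlinarith [Real.sin_sq_add_cos_sq ((a - b) / 2)]
    rw [Real.cos_sub] at hh
    nlinarith [Real.sin_sq_add_cos_sq a, Real.sin_sq_add_cos_sq b]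
  exact (pow_left_inj₀ (norm_nonneg _) (by positivity) two_ne_zero).1 this

lemma sin_add_sin_le (a b : ℝ) (ha : 0 ≤ a) (hb : 0 ≤ b) (hab : a + b ≤ π / 3) :
    2 * sin (a / 2) + 2 * sin (b / 2) ≤ 4 * sin (π / 12) := by
  have hpi := Real.pi_pos
  have h1 : sin (a / 2) + sin (b / 2) = 2 * sin ((a + b) / 4) * cos ((a - b) / 4) := by
    have e1 : a / 2 = (a + b) / 4 + (a - b) / 4 := by ring
    have e2 : b / 2 = (a + b) / 4 - (a - b) / 4 := by ring
    rw [e1, e2, sin_add, sin_sub]; ring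
  have h2 : sin ((a + b) / 4) ≤ sin (π / 12) :=
    sin_le_sin_of_le_of_le_pi_div_two (by linarith) (by linarith) (by linarith)
  have h3 : 0 ≤ sin ((a + b) / 4) := sin_nonneg_of_nonneg_of_le_pi (by linarith) (by linarith)
  have h4 := Real.cos_le_one ((a - b) / 4)
  nlinarith

lemma sin12 : sin (π / 12) = (√6 - √2) / 4 := by
  have : π / 12 = π / 3 - π / 4 := by ring
  rw [this, sin_sub, sin_pi_div_three, cos_pi_div_four, cos_pi_div_three, sin_pi_div_four]
  have : √6 = √3 * √2 := by rw [← Real.sqrt_mul (by norm_num)]; norm_num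
  rw [this]; ring

lemma sin12_ge : 1 / 4 ≤ sin (π / 12) := by
  rw [sin12]
  have h1 : (2.449:ℝ) ≤ √6 := Real.le_sqrt_of_sq_le (by norm_num)
  have h2 : √2 ≤ (1.4145:ℝ) := Real.sqrt_le_iff.2 (by norm_num)
  linarith

lemma arg_bd (z : ℂ) (him : 0 ≤ z.im) (hre : ‖z‖ / 2 ≤ z.re) :
    0 ≤ z.arg ∧ z.arg ≤ π / 3 := by
  have h0 := Complex.arg_nonneg_iff.2 him
  refine ⟨h0, ?_⟩
  by_cases hz : z = 0
  · subst hz; simp; positivity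
  have h1 := Complex.arg_le_pi z
  by_contra hc
  push Not at hc
  have h2 : cos z.arg < cos (π / 3) :=
    Real.cos_lt_cos_of_nonneg_of_le_pi (by positivity) h1 hc
  rw [Complex.cos_arg hz, cos_pi_div_three, div_lt_iff₀ (norm_pos_iff.2 hz)] at h2
  linarith

lemma sin_sum_aux (x y : ℝ) : sin (x + y) + sin (x - y) = 2 * sin x * cos y := by
  rw [sin_add, sin_sub]; ring

/-- path inequality -/
lemma path_ineq (a b : ℝ) (ha : 0 ≤ a) (hb : 0 ≤ b) (ha' : a ≤ π / 3) (hb' : b ≤ π / 3) :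
    2 * sin (a / 2) + 2 * sin (b / 2) +
      ‖Complex.exp (a * Complex.I) + Complex.exp (-b * Complex.I) - 1‖ ≤ 1 + 4 * sin (π / 12) := by
  wlog hab : b ≤ a generalizing a b
  · have := this b a hb ha hb' ha' (by linarith)
    have e : ‖Complex.exp (a * Complex.I) + Complex.exp (-b * Complex.I) - 1‖
      = ‖Complex.exp (b * Complex.I) + Complex.exp (-a * Complex.I) - 1‖ := by
      rw [← Complex.norm_conj]
      congr 1
      simp [← Complex.exp_conj]
      ring
    rw [e]; linarith
  have hpi := Real.pi_pos
  obtain ⟨s, hs⟩ : ∃ s, s = (a + b) / 2 := ⟨_, rfl⟩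
  obtain ⟨t, ht⟩ : ∃ t, t = (a - b) / 2 := ⟨_, rfl⟩
  have ea : a = s + t := by rw [hs, ht]; ring
  have eb : b = s - t := by rw [hs, ht]; ring
  subst ea eb
  clear hs ht
  have hS : sin ((s + t) / 2) + sin ((s - t) / 2) = 2 * sin (s / 2) * cos (t / 2) := by
    rw [add_div, sub_div, sin_add, sin_sub]; ring
  set R := ‖Complex.exp ((s + t : ℝ) * Complex.I) + Complex.exp (-(s - t : ℝ) * Complex.I) - 1‖
    with hR
  have hks : cos s = 1 - 2 * sin (s / 2) ^ 2 := by
    have := Real.cos_two_mul (s / 2)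
    rw [show 2 * (s / 2) = s by ring] at this
    rw [this]; nlinarith [Real.sin_sq_add_cos_sq (s / 2)]
  have hkt : cos t = 2 * cos (t / 2) ^ 2 - 1 := by
    have := Real.cos_two_mul (t / 2)
    rwa [show 2 * (t / 2) = t by ring] at this
  have hR2 : R ^ 2 = (2 * cos s + 1) ^ 2 - 8 * cos s * cos (t / 2) ^ 2 := by
    rw [hR, ← Complex.normSq_eq_norm_sq, Complex.normSq_apply]
    rw [← Complex.ofReal_neg]
    simp only [Complex.sub_re, Complex.sub_im, Complex.exp_ofReal_mul_I_re, Complex.add_re,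
      Complex.add_im, Complex.one_re, Complex.one_im,
      Complex.exp_ofReal_mul_I_im, cos_neg, sin_neg, cos_add, cos_sub, sin_add, sin_sub]
    have : 8 * cos s * cos (t / 2) ^ 2 = 4 * cos s * (cos t + 1) := by rw [hkt]; ring
    rw [this]
    have h1 := Real.sin_sq_add_cos_sq s
    have h2 := Real.sin_sq_add_cos_sq t
    have : sin t ^ 2 = 1 - cos t ^ 2 := by linarith
    linear_combination (4 * cos s ^ 2) * this
  have hR0 : 0 ≤ R := norm_nonneg _
  have hts : cos s ≤ cos t := cos_le_cos_of_nonneg_of_le_pi (by linarith) (by linarith) (by linarith)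
  have hk : 1 / 2 ≤ cos s := by
    rw [← cos_pi_div_three]
    exact cos_le_cos_of_nonneg_of_le_pi (by linarith) (by linarith) (by linarith)
  have hR1 : R ≤ 1 := by
    have : R ^ 2 ≤ 1 := by rw [hR2]; nlinarith
    nlinarith
  have hc0 : 0 ≤ cos (t / 2) := cos_nonneg_of_neg_pi_div_two_le_of_le (by linarith) (by linarith)
  have hc1 := cos_le_one (t / 2)
  have hS0 : 0 ≤ sin (s / 2) := sin_nonneg_of_nonneg_of_le_pi (by linarith) (by linarith)
  rcases le_total s (π / 6) with h6 | h6
  · have : sin (s / 2) ≤ sin (π / 12) :=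
      sin_le_sin_of_le_of_le_pi_div_two (by linarith) (by linarith) (by linarith)
    nlinarith
  · set c1 := cos (π / 6 - s / 2) with hc1d
    have hcc : c1 ≤ cos (t / 2) :=
      cos_le_cos_of_nonneg_of_le_pi (by linarith) (by linarith) (by linarith)
    have hc1h : 1 / 2 ≤ c1 := by
      rw [← cos_pi_div_three]
      exact cos_le_cos_of_nonneg_of_le_pi (by linarith) (by linarith) (by linarith)
    set R1 := 2 * sin (π / 3 - s) with hR1d
    have hSh : sin (s / 2) ≤ 1 / 2 := by
      rw [← sin_pi_div_six]
      exact sin_le_sin_of_le_of_le_pi_div_two (by linarith) (by linarith) (by linarith)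
    have hR10 : 0 ≤ R1 := by
      have := sin_nonneg_of_nonneg_of_le_pi (x := π / 3 - s) (by linarith) (by linarith)
      linarith
    have hR11 : R1 ≤ 1 := by
      have : sin (π / 3 - s) ≤ 1 / 2 := by
        rw [← sin_pi_div_six]
        exact sin_le_sin_of_le_of_le_pi_div_two (by linarith) (by linarith) (by linarith)
      linarith
    have hc1k : 2 * c1 ^ 2 - 1 = cos (π / 3 - s) := by
      rw [hc1d, ← Real.cos_two_mul]; congr 1; ring
    have h3 := Real.sq_sqrt (show (0:ℝ) ≤ 3 by norm_num)
    have hR12 : R1 ^ 2 = (2 * cos s + 1) ^ 2 - 8 * cos s * c1 ^ 2 := by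
      have : 8 * cos s * c1 ^ 2 = 4 * cos s * (cos (π / 3 - s) + 1) := by rw [← hc1k]; ring
      rw [this, hR1d, sin_sub, cos_sub, sin_pi_div_three, cos_pi_div_three]
      have h1 : sin s ^ 2 = 1 - cos s ^ 2 := by linarith [Real.sin_sq_add_cos_sq s]
      linear_combination h1 + (cos s ^ 2) * h3
    have hval : 4 * sin (s / 2) * c1 + R1 = 1 + 4 * sin (π / 12) * cos (s - π / 4) := by
      have i1 := sin_sum_aux (s / 2) (π / 6 - s / 2)
      rw [show s / 2 + (π / 6 - s / 2) = π / 6 by ring,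
        show s / 2 - (π / 6 - s / 2) = s - π / 6 by ring] at i1
      have i2 := sin_sum_aux (π / 12) (s - π / 4)
      rw [show π / 12 + (s - π / 4) = s - π / 6 by ring,
        show π / 12 - (s - π / 4) = π / 3 - s by ring] at i2
      rw [sin_pi_div_six] at i1
      linarith
    have h12 := sin12_ge
    have hcos := cos_le_one (s - π / 4)
    have hv2 : 4 * sin (s / 2) * c1 + R1 ≤ 1 + 4 * sin (π / 12) := by rw [hval]; nlinarith
    have hdiff : (R1 - R) * (R1 + R) = 8 * cos s * (cos (t / 2) - c1) * (cos (t / 2) + c1) := by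
      linear_combination hR12 - hR2
    have hx : 0 ≤ cos (t / 2) - c1 := by linarith
    have hRR : R ≤ R1 := by
      have : 0 ≤ 8 * cos s * (cos (t / 2) - c1) * (cos (t / 2) + c1) := by positivity
      by_contra hcon
      push Not at hcon
      have := mul_neg_of_neg_of_pos (show R1 - R < 0 by linarith) (show 0 < R1 + R by linarith)
      linarith
    have h7 : 4 * (cos (t / 2) - c1) ≤ (R1 - R) * (R1 + R) := by
      rw [hdiff]
      have h71 : 1 ≤ 2 * cos s := by linarith
      have h72 : 1 ≤ cos (t / 2) + c1 := by linarith
      have h73 := mul_le_mul h71 h72 (by norm_num) (by linarith)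
      have h74 := mul_le_mul_of_nonneg_left h73 hx
      linarith
    have h8 : (R1 - R) * (R1 + R) ≤ (R1 - R) * 2 := by
      apply mul_le_mul_of_nonneg_left <;> linarith
    have h9 : sin (s / 2) * (cos (t / 2) - c1) ≤ 1 / 2 * (cos (t / 2) - c1) := by gcongr
    linarith


lemma ray_seg (e : ℂ) (x y : ℝ) (hxy : x ≤ y) (hy : y ≤ 1) : y • e ∈ segment ℝ (x • e) e := by
  by_cases h1 : x = 1
  · have : y = 1 := by linarith
    rw [this, one_smul]; exact right_mem_segment ℝ _ _
  · have hpos : 0 < 1 - x := by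
      have : x < 1 := lt_of_le_of_ne (by linarith) h1
      linarith
    refine ⟨(1 - y) / (1 - x), (y - x) / (1 - x),
      div_nonneg (by linarith) hpos.le, div_nonneg (by linarith) hpos.le, ?_, ?_⟩
    · rw [← add_div, div_eq_one_iff_eq hpos.ne']; ring
    · rw [smul_smul, ← add_smul]
      congr 1
      rw [div_mul_eq_mul_div, ← add_div, div_eq_iff hpos.ne']; ring

lemma arc_one (w d : ℂ) (l m : ℝ) (hl : 0 ≤ l) (hm : 0 ≤ m) (hw : ‖w‖ = 1) (hd : ‖d‖ = 1)
    (hdw : d = l + m * w) (hre : 1 / 2 ≤ w.re) :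
    ‖1 - d‖ + ‖w - d‖ ≤ 4 * sin (π / 12) := by
  wlog him : 0 ≤ w.im generalizing w d
  · have := this (starRingEnd ℂ w) (starRingEnd ℂ d) (by rwa [Complex.norm_conj])
      (by rwa [Complex.norm_conj]) (by rw [hdw]; simp) (by simpa using hre)
      (by rw [Complex.conj_im]; linarith)
    have e1 : ‖1 - d‖ = ‖1 - starRingEnd ℂ d‖ := by
      rw [← Complex.norm_conj]; simp
    have e2 : ‖w - d‖ = ‖starRingEnd ℂ w - starRingEnd ℂ d‖ := by
      rw [← Complex.norm_conj]; simp
    rw [e1, e2]; exact this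
  have hpi := Real.pi_pos
  obtain ⟨t0, t1⟩ := arg_bd w him (by rw [hw]; exact hre)
  have hdre : d.re = l + m * w.re := by rw [hdw]; simp
  have hdim : d.im = m * w.im := by rw [hdw]; simp
  have hlm : 1 ≤ l + m := by
    rw [← hd, hdw]
    refine (norm_add_le _ _).trans ?_
    rw [norm_mul, hw, Complex.norm_real, Complex.norm_real, Real.norm_of_nonneg hl,
      Real.norm_of_nonneg hm, mul_one]
  obtain ⟨p0, p1⟩ := arg_bd d (by rw [hdim]; positivity) (by rw [hd, hdre]; nlinarith)
  have ew : w = Complex.exp (w.arg * Complex.I) := by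
    have := Complex.norm_mul_exp_arg_mul_I w
    rw [hw] at this; simpa using this.symm
  have ed : d = Complex.exp (d.arg * Complex.I) := by
    have := Complex.norm_mul_exp_arg_mul_I d
    rw [hd] at this; simpa using this.symm
  set θ := w.arg
  set φ := d.arg
  have hle : φ ≤ θ := by
    by_contra hc
    push Not at hc
    have h1 : 0 < sin (φ - θ) := sin_pos_of_pos_of_lt_pi (by linarith) (by linarith)
    have w1 : w.re = cos θ := by rw [ew]; exact Complex.exp_ofReal_mul_I_re _
    have w2 : w.im = sin θ := by rw [ew]; exact Complex.exp_ofReal_mul_I_im _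
    have d1 : d.re = cos φ := by rw [ed]; exact Complex.exp_ofReal_mul_I_re _
    have d2 : d.im = sin φ := by rw [ed]; exact Complex.exp_ofReal_mul_I_im _
    rw [sin_sub, ← w1, ← w2, ← d1, ← d2, hdre, hdim] at h1
    nlinarith
  have n1 : ‖1 - d‖ = 2 * sin (φ / 2) := by
    have := norm_exp_sub φ 0 p0 (by linarith)
    rw [← ed] at this
    rw [norm_sub_rev]
    simpa using this
  have n2 : ‖w - d‖ = 2 * sin ((θ - φ) / 2) := by
    have := norm_exp_sub θ φ hle (by linarith)
    rwa [← ed, ← ew] at this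
  rw [n1, n2]
  exact sin_add_sin_le _ _ p0 (by linarith) (by linarith)

lemma arc_gen (a c d : ℂ) (l m : ℝ) (hl : 0 ≤ l) (hm : 0 ≤ m) (ha : ‖a‖ = 1) (hc : ‖c‖ = 1)
    (hd : ‖d‖ = 1) (hda : d = l * a + m * c) (hre : 1 / 2 ≤ (a * starRingEnd ℂ c).re) :
    ‖a - d‖ + ‖c - d‖ ≤ 4 * sin (π / 12) := by
  have ha0 : a ≠ 0 := by rintro rfl; simp at ha
  have h := arc_one (c / a) (d / a) l m hl hm (by rw [norm_div, ha, hc, div_one])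
    (by rw [norm_div, ha, hd, div_one]) (by rw [hda]; field_simp) (by
      have : c / a = c * starRingEnd ℂ a := by
        rw [div_eq_mul_inv, Complex.inv_def, Complex.normSq_eq_norm_sq, ha]; simp
      rw [this]
      simp only [Complex.mul_re, Complex.conj_re, Complex.conj_im] at hre ⊢
      linarith)
  have e1 : ‖1 - d / a‖ = ‖a - d‖ := by
    rw [show 1 - d / a = (a - d) / a by field_simp, norm_div, ha, div_one]
  have e2 : ‖c / a - d / a‖ = ‖c - d‖ := by
    rw [← sub_div, norm_div, ha, div_one]
  rwa [e1, e2] at h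

lemma radial (A d : ℂ) (hA : ‖A‖ ≤ 1) (hA0 : A ≠ 0) (hd : ‖d‖ = 1) :
    ‖A‖ + ‖A - d‖ ≤ 1 + ‖A / ‖A‖ - d‖ := by
  have hn : (‖A‖ : ℂ) ≠ 0 := by simpa using hA0
  have : A - d = ‖A‖ * (A / ‖A‖ - d) - ((1 - ‖A‖ : ℝ) : ℂ) * d := by
    push_cast; field_simp; ring
  have h2 : ‖A - d‖ ≤ ‖A‖ * ‖A / ‖A‖ - d‖ + (1 - ‖A‖) := by
    rw [this]
    refine (norm_sub_le _ _).trans ?_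
    rw [norm_mul, norm_mul, hd, Complex.norm_real, Complex.norm_real, norm_norm,
      Real.norm_of_nonneg (by linarith), mul_one]
  nlinarith [norm_nonneg (A / ‖A‖ - d)]

lemma lemma1_zero (A C D O : ℂ) (hA : ‖A‖ ≤ 1) (hC : ‖C‖ ≤ 1) (hD : ‖D‖ ≤ 1)
    (hAD : ‖A - D‖ ≤ 1) (hCD : ‖C - D‖ ≤ 1)
    (hO : O ∈ segment ℝ A C) (hO' : O ∈ segment ℝ 0 D)
    (hang : ‖A‖ * ‖C‖ / 2 ≤ (A * starRingEnd ℂ C).re) :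
    ‖A‖ + ‖C‖ + ‖A - D‖ + ‖C - D‖ ≤ 2 + 4 * sin (π / 12) := by
  have h12 := sin12_ge
  by_cases hA0 : A = 0
  · rw [hA0] at *; rw [norm_zero, zero_sub, norm_neg]; linarith
  by_cases hC0 : C = 0
  · rw [hC0] at *; rw [norm_zero, zero_sub, norm_neg]; linarith
  have hAp : 0 < ‖A‖ := norm_pos_iff.2 hA0
  have hCp : 0 < ‖C‖ := norm_pos_iff.2 hC0
  obtain ⟨s, t, hs, ht, hst, rfl⟩ := id hO
  obtain ⟨k', k, hk', hk, hkk, hOD⟩ := id hO'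
  rw [smul_zero, zero_add] at hOD
  have hO0 : s • A + t • C ≠ 0 := by
    intro h0
    have h1 : (s • A + t • C) * starRingEnd ℂ A = 0 := by rw [h0, zero_mul]
    have h2 : (s • A + t • C) * starRingEnd ℂ C = 0 := by rw [h0, zero_mul]
    have h1 := congrArg Complex.re h1
    have h2 := congrArg Complex.re h2
    have nA : ‖A‖ ^ 2 = A.re * A.re + A.im * A.im := by
      rw [← Complex.normSq_eq_norm_sq, Complex.normSq_apply]
    have nC : ‖C‖ ^ 2 = C.re * C.re + C.im * C.im := by
      rw [← Complex.normSq_eq_norm_sq, Complex.normSq_apply]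
    simp at h1 h2 hang
    have hp : 0 < ‖A‖ * ‖C‖ / 2 := by positivity
    have q1 : s * ‖A‖ ^ 2 + t * (A.re * C.re + A.im * C.im) = 0 := by rw [nA]; linarith
    have q2 : t * ‖C‖ ^ 2 + s * (A.re * C.re + A.im * C.im) = 0 := by rw [nC]; linarith
    have hs0 : s = 0 := by
      have : 0 ≤ t * (A.re * C.re + A.im * C.im) := mul_nonneg ht (by linarith)
      have h3 : s * ‖A‖ ^ 2 ≤ 0 := by linarith
      by_contra hne
      have : 0 < s * ‖A‖ ^ 2 := by positivity
      linarith
    have ht0 : t = 0 := by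
      have : 0 ≤ s * (A.re * C.re + A.im * C.im) := mul_nonneg hs (by linarith)
      have h3 : t * ‖C‖ ^ 2 ≤ 0 := by linarith
      by_contra hne
      have : 0 < t * ‖C‖ ^ 2 := by positivity
      linarith
    linarith
  have hk0 : k ≠ 0 := by rintro rfl; rw [zero_smul] at hOD; exact hO0 hOD.symm
  have hD0 : D ≠ 0 := by rintro rfl; rw [smul_zero] at hOD; exact hO0 hOD.symm
  have hkp : 0 < k := lt_of_le_of_ne hk (Ne.symm hk0)
  have hDp : 0 < ‖D‖ := norm_pos_iff.2 hD0
  have hDc : (‖D‖ : ℂ) ≠ 0 := by simpa using hD0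
  have hAc : (‖A‖ : ℂ) ≠ 0 := by simpa using hA0
  have hCc : (‖C‖ : ℂ) ≠ 0 := by simpa using hC0
  set d : ℂ := D / ‖D‖ with hd
  have hdn : ‖d‖ = 1 := by
    rw [hd, norm_div, Complex.norm_real, norm_norm, div_self hDp.ne']
  have hk1 : k ≤ 1 := by linarith
  have hseg : D ∈ segment ℝ (s • A + t • C) d := by
    rw [← hOD]
    have hDd : D = ‖D‖ • d := by rw [hd, Complex.real_smul]; field_simp
    have := ray_seg d (k * ‖D‖) ‖D‖ (by nlinarith) hD
    rwa [mul_smul, ← hDd] at this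
  have hext := ext_lem A C _ D d hO hseg
  have r1 := radial A d hA hA0 hdn
  have r2 := radial C d hC hC0 hdn
  have harc := arc_gen (A / ‖A‖) (C / ‖C‖) d (s * ‖A‖ / (k * ‖D‖)) (t * ‖C‖ / (k * ‖D‖))
    (by positivity) (by positivity)
    (by rw [norm_div, Complex.norm_real, norm_norm, div_self hAp.ne'])
    (by rw [norm_div, Complex.norm_real, norm_norm, div_self hCp.ne']) hdn
    (by
      have hkc : (k : ℂ) ≠ 0 := by exact_mod_cast hk0
      rw [Complex.real_smul, Complex.real_smul, Complex.real_smul] at hOD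
      push_cast
      rw [hd]
      field_simp
      rw [mul_comm D]; exact hOD)
    (by
      have : A / ‖A‖ * starRingEnd ℂ (C / ‖C‖)
        = ((1 / (‖A‖ * ‖C‖) : ℝ) : ℂ) * (A * starRingEnd ℂ C) := by
        rw [map_div₀, Complex.conj_ofReal]; push_cast; field_simp
      rw [this, Complex.re_ofReal_mul]
      rw [one_div_mul_eq_div, le_div_iff₀ (by positivity)]
      linarith)
  linarith

lemma lemma1 (A B C D O : ℂ) (hA : ‖A - B‖ ≤ 1) (hC : ‖C - B‖ ≤ 1) (hD : ‖D - B‖ ≤ 1)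
    (hAD : ‖A - D‖ ≤ 1) (hCD : ‖C - D‖ ≤ 1)
    (hO : O ∈ segment ℝ A C) (hO' : O ∈ segment ℝ B D)
    (hang : ‖A - B‖ * ‖C - B‖ / 2 ≤ ((A - B) * starRingEnd ℂ (C - B)).re) :
    ‖A - B‖ + ‖C - B‖ + ‖A - D‖ + ‖C - D‖ ≤ 2 + 4 * sin (π / 12) := by
  have h := lemma1_zero (A - B) (C - B) (D - B) (O - B) hA hC hD
    (by rwa [sub_sub_sub_cancel_right]) (by rwa [sub_sub_sub_cancel_right])
    (by
      obtain ⟨s, t, hs, ht, hst, rfl⟩ := hO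
      refine ⟨s, t, hs, ht, hst, ?_⟩
      have : s = 1 - t := by linarith
      subst this; module)
    (by
      obtain ⟨s, t, hs, ht, hst, rfl⟩ := hO'
      refine ⟨s, t, hs, ht, hst, ?_⟩
      have : s = 1 - t := by linarith
      subst this; module) hang
  rwa [sub_sub_sub_cancel_right, sub_sub_sub_cancel_right] at h


lemma side_up (C D O : ℂ) (hC : ‖C‖ ≤ 1) (hCB : ‖C - 1‖ ≤ 1) (hD : ‖D‖ ≤ 1) (hDB : ‖D - 1‖ ≤ 1)
    (hCD : ‖C - D‖ ≤ 1) (hO : O ∈ segment ℝ 0 C) (hO' : O ∈ segment ℝ 1 D)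
    (hCi : 0 ≤ C.im) (hDi : 0 ≤ D.im) :
    1 + ‖C - 1‖ + ‖C - D‖ + ‖D‖ ≤ 2 + 4 * sin (π / 12) := by
  by_cases h1 : ‖C‖ / 2 ≤ C.re
  swap
  · have h2 : ‖C - 1‖ / 2 ≤ 1 - C.re := by
      have : 1 / 2 ≤ 1 - C.re := by linarith
      linarith
    have := lemma1 0 1 C D O (by simp) hCB hDB (by simpa using hD) hCD hO hO' (by
      simp; linarith)
    simp at this
    linarith
  by_cases h2 : ‖D - 1‖ / 2 ≤ 1 - D.re
  swap
  · have h3 : ‖D‖ / 2 ≤ D.re := by linarith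
    have := lemma1 1 0 D C O (by simp) (by simpa using hD) (by simpa using hC)
      (by rwa [norm_sub_rev]) (by rwa [norm_sub_rev]) hO' hO (by simp; linarith)
    simp at this
    rw [norm_sub_rev 1 C, norm_sub_rev D C] at this
    linarith
  obtain ⟨a0, a1⟩ := arg_bd C hCi h1
  set E : ℂ := starRingEnd ℂ (1 - D) with hE
  have hEn : ‖E‖ = ‖D - 1‖ := by rw [hE, Complex.norm_conj, norm_sub_rev]
  obtain ⟨b0, b1⟩ := arg_bd E (by simp [hE, hDi]) (by rw [hEn]; simpa [hE] using h2)
  set a := C.arg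
  set b := E.arg
  have hpi := Real.pi_pos
  have eC : C = ‖C‖ • Complex.exp (a * Complex.I) := by
    rw [Complex.real_smul]; exact (Complex.norm_mul_exp_arg_mul_I C).symm
  have eD : 1 - D = ‖D - 1‖ • Complex.exp (-b * Complex.I) := by
    have h := (Complex.norm_mul_exp_arg_mul_I E).symm
    have h := congrArg (starRingEnd ℂ) h
    rw [hEn, hE] at h
    simp only [Complex.conj_conj, map_mul, Complex.conj_ofReal, ← Complex.exp_conj,
      Complex.conj_I] at h
    rw [h, Complex.real_smul]
    congr 2
    ring
  set ea := Complex.exp (a * Complex.I)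
  set eb := Complex.exp (-b * Complex.I)
  -- extend C
  have hCs : C ∈ segment ℝ O ea := by
    obtain ⟨k', k, hk', hk, hkk, hOC⟩ := hO
    rw [smul_zero, zero_add] at hOC
    have := ray_seg ea (k * ‖C‖) ‖C‖ (by nlinarith [norm_nonneg C]) hC
    rw [mul_smul, ← eC] at this
    rwa [← hOC]
  have hX := ext_lem 1 D O C ea hO' hCs
  have hO2 : O ∈ segment ℝ 0 ea := by
    obtain ⟨k', k, hk', hk, hkk, hOC⟩ := hO
    refine ⟨1 - k * ‖C‖, k * ‖C‖, by nlinarith [norm_nonneg C], by positivity, by ring, ?_⟩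
    rw [smul_zero, zero_add, mul_smul, ← eC, ← hOC, smul_zero, zero_add]
  have hDs : D ∈ segment ℝ O (1 - eb) := by
    obtain ⟨k', k, hk', hk, hkk, hOC⟩ := hO'
    have := ray_seg eb (k * ‖D - 1‖) ‖D - 1‖ (by nlinarith [norm_nonneg (D - 1)]) hDB
    rw [mul_smul, ← eD] at this
    obtain ⟨x, y, hx, hy, hxy, hh⟩ := this
    refine ⟨x, y, hx, hy, hxy, ?_⟩
    have e1 : O = 1 - k • (1 - D) := by
      rw [← hOC]
      have : k' = 1 - k := by linarith
      subst this; module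
    have e2 : D = 1 - (1 - D) := by ring
    rw [e1]
    conv_rhs => rw [e2, ← hh]
    have : x = 1 - y := by linarith
    subst this; module
  have hY := ext_lem 0 ea O D (1 - eb) hO2 hDs
  have hP := path_ineq a b a0 b0 a1 b1
  have n1 : ‖1 - ea‖ = 2 * sin (a / 2) := by
    have := norm_exp_sub a 0 a0 (by linarith)
    rw [norm_sub_rev]; simpa using this
  have n2 : ‖0 - (1 - eb)‖ = 2 * sin (b / 2) := by
    have := norm_exp_sub 0 (-b) (by linarith) (by linarith)
    rw [norm_sub_rev] at this
    simp at this
    rw [zero_sub, neg_sub]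
    simpa [eb] using this
  have n3 : ‖ea - (1 - eb)‖ = ‖ea + eb - 1‖ := by congr 1; ring
  rw [n2, n3, zero_sub, norm_neg, norm_sub_rev ea D] at hY
  rw [n1, norm_sub_rev 1 C, norm_sub_rev D C] at hX
  linarith

lemma side_norm (C D O : ℂ) (hC : ‖C‖ ≤ 1) (hCB : ‖C - 1‖ ≤ 1) (hD : ‖D‖ ≤ 1)
    (hDB : ‖D - 1‖ ≤ 1)
    (hCD : ‖C - D‖ ≤ 1) (hO : O ∈ segment ℝ 0 C) (hO' : O ∈ segment ℝ 1 D) :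
    1 + ‖C - 1‖ + ‖C - D‖ + ‖D‖ ≤ 2 + 4 * sin (π / 12) := by
  have h12 := sin12_ge
  obtain ⟨s', s, hs', hs, hss, e1⟩ := id hO
  obtain ⟨t', t, ht', ht, htt, e2⟩ := id hO'
  have him : s * C.im = t * D.im := by
    have := congrArg Complex.im (e1.trans e2.symm)
    simpa using this
  have hre : s * C.re = t' + t * D.re := by
    have := congrArg Complex.re (e1.trans e2.symm)
    simpa using this
  rcases hs.eq_or_lt with h0 | hsp
  · -- `O = 0`
    subst h0
    have hd : t = 1 := by
      have h1 := Complex.abs_re_le_norm (D - 1)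
      rw [Complex.sub_re, Complex.one_re] at h1
      have := (abs_le.1 (h1.trans hDB)).1
      nlinarith
    subst hd
    have hD0 : D = 0 := by
      apply Complex.ext
      · simp; linarith
      · simp; linarith
    subst hD0
    rw [norm_zero]
    linarith
  rcases ht.eq_or_lt with h0 | htp
  · subst h0
    have h1 := Complex.abs_re_le_norm C
    have h2 := (abs_le.1 (h1.trans hC)).2
    have : s = 1 := by nlinarith
    subst this
    have hC1 : C = 1 := by
      apply Complex.ext
      · simp; linarith
      · simp; linarith
    subst hC1
    rw [sub_self, norm_zero]
    linarith
  by_cases hCi : 0 ≤ C.im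
  · have hDi : 0 ≤ D.im := by
      by_contra hc
      push Not at hc
      have := mul_neg_of_pos_of_neg htp hc
      have := mul_nonneg hs hCi
      linarith
    exact side_up C D O hC hCB hD hDB hCD hO hO' hCi hDi
  · push Not at hCi
    have hDi : D.im ≤ 0 := by
      by_contra hc
      push Not at hc
      have := mul_pos htp hc
      have := mul_neg_of_pos_of_neg hsp hCi
      linarith
    have n1 : ∀ z w : ℂ, ‖starRingEnd ℂ z - starRingEnd ℂ w‖ = ‖z - w‖ := by
      intro z w; rw [← map_sub, Complex.norm_conj]
    have n2 : ∀ z : ℂ, ‖starRingEnd ℂ z - 1‖ = ‖z - 1‖ := by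
      intro z; rw [← n1]; simp
    have := side_up (starRingEnd ℂ C) (starRingEnd ℂ D) (starRingEnd ℂ O)
      (by rwa [Complex.norm_conj]) (by rwa [n2]) (by rwa [Complex.norm_conj]) (by rwa [n2])
      (by rwa [n1])
      (by rw [← e1]; exact ⟨s', s, hs', hs, hss, by simp⟩)
      (by rw [← e2]; exact ⟨t', t, ht', ht, htt, by simp⟩)
      (by rw [Complex.conj_im]; linarith) (by rw [Complex.conj_im]; linarith)
    rwa [n1, n2, Complex.norm_conj] at this

lemma side_gen (A B C D O : ℂ) (hAB : ‖A - B‖ = 1) (hBC : ‖B - C‖ ≤ 1) (hCD : ‖C - D‖ ≤ 1)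
    (hDA : ‖D - A‖ ≤ 1) (hAC : ‖A - C‖ ≤ 1) (hBD : ‖B - D‖ ≤ 1)
    (hO : O ∈ segment ℝ A C) (hO' : O ∈ segment ℝ B D) :
    ‖A - B‖ + ‖B - C‖ + ‖C - D‖ + ‖D - A‖ ≤ 2 + 4 * sin (π / 12) := by
  have hn : ‖B - A‖ = 1 := by rwa [norm_sub_rev]
  have h0 : B - A ≠ 0 := by intro h; rw [h] at hn; simp at hn
  have n0 : ∀ z : ℂ, ‖z / (B - A)‖ = ‖z‖ := by intro z; rw [norm_div, hn, div_one]
  have n1 : ∀ z : ℂ, ‖(z - A) / (B - A) - 1‖ = ‖z - B‖ := by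
    intro z
    rw [show (z - A) / (B - A) - 1 = (z - B) / (B - A) by field_simp; ring, n0]
  have n2 : ∀ z w : ℂ, ‖(z - A) / (B - A) - (w - A) / (B - A)‖ = ‖z - w‖ := by
    intro z w
    rw [← sub_div, n0, sub_sub_sub_cancel_right]
  have := side_norm ((C - A) / (B - A)) ((D - A) / (B - A)) ((O - A) / (B - A))
    (by rw [n0, norm_sub_rev]; exact hAC) (by rw [n1, norm_sub_rev]; exact hBC)
    (by rw [n0]; exact hDA) (by rw [n1, norm_sub_rev]; exact hBD) (by rw [n2]; exact hCD)
    (by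
      obtain ⟨s, t, hs, ht, hst, rfl⟩ := hO
      refine ⟨s, t, hs, ht, hst, ?_⟩
      have : s = 1 - t := by linarith
      subst this
      simp only [Complex.real_smul]
      push_cast
      field_simp
      ring)
    (by
      obtain ⟨s, t, hs, ht, hst, rfl⟩ := hO'
      refine ⟨s, t, hs, ht, hst, ?_⟩
      have : s = 1 - t := by linarith
      subst this
      simp only [Complex.real_smul]
      push_cast
      field_simp
      ring)
  rw [n0, n1, n2, norm_sub_rev C B] at this
  rw [hAB]; exact this

lemma deg_case (A B C D : ℂ) (hCD : ‖C - D‖ ≤ 1)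
    (hDA : ‖D - A‖ ≤ 1) (hAC : ‖A - C‖ ≤ 1) 
    (hO : B ∈ segment ℝ A C) :
    ‖A - B‖ + ‖B - C‖ + ‖C - D‖ + ‖D - A‖ ≤ 2 + 4 * sin (π / 12) := by
  have h12 := sin12_ge
  have : ‖A - B‖ + ‖B - C‖ = ‖A - C‖ := by
    simpa [dist_eq_norm] using dist_add_dist_of_mem_segment hO
  linarith

/-- any side has length one, or degenerate -/
lemma side_any (A B C D O : ℂ) (hAB : ‖A - B‖ ≤ 1) (hBC : ‖B - C‖ ≤ 1) (hCD : ‖C - D‖ ≤ 1)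
    (hDA : ‖D - A‖ ≤ 1) (hAC : ‖A - C‖ ≤ 1) (hBD : ‖B - D‖ ≤ 1)
    (hO : O ∈ segment ℝ A C) (hO' : O ∈ segment ℝ B D)
    (h : max (max ‖A - B‖ ‖B - C‖) (max ‖C - D‖ ‖D - A‖) = 1) :
    ‖A - B‖ + ‖B - C‖ + ‖C - D‖ + ‖D - A‖ ≤ 2 + 4 * sin (π / 12) := by
  have h' : ‖A - B‖ = 1 ∨ ‖B - C‖ = 1 ∨ ‖C - D‖ = 1 ∨ ‖D - A‖ = 1 := by
    by_contra hc
    push Not at hc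
    obtain ⟨c1, c2, c3, c4⟩ := hc
    have : max (max ‖A - B‖ ‖B - C‖) (max ‖C - D‖ ‖D - A‖) < 1 :=
      max_lt (max_lt (lt_of_le_of_ne hAB c1) (lt_of_le_of_ne hBC c2))
        (max_lt (lt_of_le_of_ne hCD c3) (lt_of_le_of_ne hDA c4))
    linarith
  have hCA : ‖C - A‖ ≤ 1 := by rwa [norm_sub_rev]
  have hDB : ‖D - B‖ ≤ 1 := by rwa [norm_sub_rev]
  have hO1 : O ∈ segment ℝ C A := by rwa [segment_symm]
  have hO1' : O ∈ segment ℝ D B := by rwa [segment_symm]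
  rcases h' with h | h | h | h
  · exact side_gen A B C D O h hBC hCD hDA hAC hBD hO hO'
  · have := side_gen B C D A O h hCD hDA hAB hBD hCA hO' hO1
    linarith
  · have := side_gen C D A B O h hDA hAB hBC hCA hDB hO1 hO1'
    linarith
  · have := side_gen D A B C O h hAB hBC hCD hDB hAC hO1' hO
    linarith

lemma quad (A B C D O : ℂ) (hAB : ‖A - B‖ ≤ 1) (hBC : ‖B - C‖ ≤ 1) (hCD : ‖C - D‖ ≤ 1)
    (hDA : ‖D - A‖ ≤ 1) (hAC : ‖A - C‖ ≤ 1) (hBD : ‖B - D‖ ≤ 1)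
    (hO : O ∈ segment ℝ A C) (hO' : O ∈ segment ℝ B D) :
    ‖A - B‖ + ‖B - C‖ + ‖C - D‖ + ‖D - A‖ ≤ 2 + 4 * sin (π / 12) := by
  -- one sided slide
  have key : ∀ B D : ℂ, ‖A - B‖ ≤ 1 → ‖B - C‖ ≤ 1 → ‖C - D‖ ≤ 1 → ‖D - A‖ ≤ 1 → ‖B - D‖ ≤ 1 →
      ∀ θ : ℝ, 0 ≤ θ → θ ≤ 1 → O = B + θ • (D - B) → ∃ y, 0 ≤ y ∧ y ≤ θ ∧
      ‖A - (B + y • (D - B))‖ + ‖(B + y • (D - B)) - C‖ + ‖C - (D + y • (D - B))‖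
        + ‖(D + y • (D - B)) - A‖ ≤ 2 + 4 * sin (π / 12) := by
    intro B D hAB hBC hCD hDA hBD θ h0 h1 hOe
    set f : ℝ → ℝ := fun y => max (max ‖A - (B + y • (D - B))‖ ‖(B + y • (D - B)) - C‖)
      (max ‖C - (D + y • (D - B))‖ ‖(D + y • (D - B)) - A‖) with hf
    have hfc : Continuous f := by rw [hf]; fun_prop
    by_cases hθ : f θ ≤ 1
    · refine ⟨θ, h0, le_rfl, ?_⟩
      have h3 := le_trans (le_max_right _ _) hθ
      apply deg_case _ _ _ _ (le_trans (le_max_left _ _) h3) (le_trans (le_max_right _ _) h3) hAC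
      rwa [← hOe]
    · push Not at hθ
      have hf0 : f 0 ≤ 1 := by
        simp only [hf, zero_smul, add_zero]
        exact max_le (max_le hAB hBC) (max_le hCD hDA)
      obtain ⟨y, ⟨hy0, hy1⟩, hy⟩ := intermediate_value_Icc h0 hfc.continuousOn
        (show (1:ℝ) ∈ Set.Icc (f 0) (f θ) from ⟨hf0, hθ.le⟩)
      refine ⟨y, hy0, hy1, ?_⟩
      have hle := hy.le
      have hl1 := le_trans (le_max_left _ _) hle
      have hl2 := le_trans (le_max_right _ _) hle
      refine side_any _ _ _ _ O (le_trans (le_max_left _ _) hl1) (le_trans (le_max_right _ _) hl1)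
        (le_trans (le_max_left _ _) hl2) (le_trans (le_max_right _ _) hl2) hAC ?_ hO ?_ hy
      · rw [add_sub_add_right_eq_sub]; exact hBD
      · refine ⟨1 - (θ - y), θ - y, by linarith, by linarith, by ring, ?_⟩
        rw [hOe]; module
  obtain ⟨θ', θ, hθ', hθ, hθθ, hOe⟩ := id hO'
  obtain ⟨y, hy0, hy1, hy⟩ := key B D hAB hBC hCD hDA hBD θ hθ (by linarith) (by
    rw [← hOe]
    have : θ' = 1 - θ := by linarith
    subst this; module)
  obtain ⟨z, hz0, hz1, hz⟩ := key D B (by rwa [norm_sub_rev]) (by rwa [norm_sub_rev])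
    (by rwa [norm_sub_rev]) (by rwa [norm_sub_rev]) (by rwa [norm_sub_rev]) θ' hθ' (by linarith) (by
    rw [← hOe]
    have : θ' = 1 - θ := by linarith
    subst this; module)
  rcases (add_nonneg hy0 hz0).eq_or_lt with hyz | hyz
  · have : y = 0 := by linarith
    subst this
    simpa using hy
  · -- convexity
    have cv : ∀ X Y : ℂ, ‖X‖ * (y + z) ≤ z * ‖X + y • Y‖ + y * ‖X - z • Y‖ := by
      intro X Y
      have e : (y + z) • X = z • (X + y • Y) + y • (X - z • Y) := by module
      have := norm_add_le (z • (X + y • Y)) (y • (X - z • Y))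
      rw [← e, norm_smul, norm_smul, norm_smul, Real.norm_of_nonneg hy0, Real.norm_of_nonneg hz0,
        Real.norm_of_nonneg hyz.le] at this
      linarith
    have c1 := cv (A - B) (B - D)
    have c2 := cv (B - C) (D - B)
    have c3 := cv (C - D) (B - D)
    have c4 := cv (D - A) (D - B)
    rw [show A - B + y • (B - D) = A - (B + y • (D - B)) by module,
      show A - B - z • (B - D) = -(B + z • (B - D) - A) by module, norm_neg] at c1
    rw [show B - C + y • (D - B) = B + y • (D - B) - C by module,
      show B - C - z • (D - B) = -(C - (B + z • (B - D))) by module, norm_neg] at c2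
    rw [show C - D + y • (B - D) = C - (D + y • (D - B)) by module,
      show C - D - z • (B - D) = -(D + z • (B - D) - C) by module, norm_neg] at c3
    rw [show D - A + y • (D - B) = D + y • (D - B) - A by module,
      show D - A - z • (D - B) = -(A - (D + z • (B - D))) by module, norm_neg] at c4
    have m1 := mul_le_mul_of_nonneg_left hy hz0
    have m2 := mul_le_mul_of_nonneg_left hz hy0
    refine le_of_mul_le_mul_right ?_ hyz
    linarith


def crs (z w : ℂ) : ℝ := z.re * w.im - z.im * w.re

lemma crs_unit (e z : ℂ) (he : ‖e‖ = 1) (h : crs e z = 0) : ∃ t : ℝ, z = t • e := by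
  refine ⟨z.re * e.re + z.im * e.im, ?_⟩
  have h1 : e.re * e.re + e.im * e.im = 1 := by
    rw [← Complex.normSq_apply, Complex.normSq_eq_norm_sq, he]; norm_num
  unfold crs at h
  apply Complex.ext
  · simp; linear_combination (-z.re) * h1 - e.im * h
  · simp; linear_combination (-z.im) * h1 + e.re * h

lemma geo_ord (b : Fin 4 → ℂ) (h0 : ∑ i, b i = 0) (hS : ∀ S : Finset (Fin 4), ‖∑ i ∈ S, b i‖ ≤ 1)
    (c01 : 0 ≤ crs (b 0) (b 1)) (c12 : 0 ≤ crs (b 1) (b 2)) (c23 : 0 ≤ crs (b 2) (b 3))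
    (c30 : 0 ≤ crs (b 3) (b 0)) : ∑ i, ‖b i‖ ≤ 2 + 4 * sin (π / 12) := by
  have s0 : ‖b 0‖ ≤ 1 := by simpa using hS {0}
  have s1 : ‖b 1‖ ≤ 1 := by simpa using hS {1}
  have s2 : ‖b 2‖ ≤ 1 := by simpa using hS {2}
  have s3 : ‖b 3‖ ≤ 1 := by simpa using hS {3}
  have s01 : ‖b 0 + b 1‖ ≤ 1 := by simpa using hS {0, 1}
  have s12 : ‖b 1 + b 2‖ ≤ 1 := by simpa using hS {1, 2}
  have s02 : ‖b 0 + b 2‖ ≤ 1 := by simpa using hS {0, 2}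
  rw [Fin.sum_univ_four] at h0 ⊢
  have hb3 : b 3 = -(b 0 + b 1 + b 2) := by linear_combination h0
  have hsum : crs (b 0) (b 1) + crs (b 2) (b 3) = crs (b 1) (b 2) + crs (b 3) (b 0) := by
    rw [hb3]; simp [crs]; ring
  rcases (add_nonneg c01 c23).eq_or_lt with hz | hpos
  · have d01 : crs (b 0) (b 1) = 0 := by linarith
    have d23 : crs (b 2) (b 3) = 0 := by linarith
    have d12 : crs (b 1) (b 2) = 0 := by linarith
    have d30 : crs (b 3) (b 0) = 0 := by linarith
    have d02 : crs (b 0) (b 2) = 0 := by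
      rw [hb3] at d30; simp [crs] at d01 d30 ⊢; linarith
    have h12 := sin12_ge
    have anti : ∀ z w, crs z w = 0 → crs w z = 0 := by
      intro z w h; simp only [crs] at h ⊢; linarith
    have slf : ∀ z, crs z z = 0 := by intro z; simp only [crs]; ring
    by_cases hall : b 0 = 0 ∧ b 1 = 0 ∧ b 2 = 0
    · obtain ⟨e0, e1, e2⟩ := hall
      rw [hb3, e0, e1, e2]; simp; linarith
    have : ∃ v : ℂ, v ≠ 0 ∧ crs v (b 0) = 0 ∧ crs v (b 1) = 0 ∧ crs v (b 2) = 0 := by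
      by_cases e0 : b 0 = 0
      · by_cases e1 : b 1 = 0
        · have e2 : b 2 ≠ 0 := fun e2 => hall ⟨e0, e1, e2⟩
          exact ⟨b 2, e2, anti _ _ d02, anti _ _ d12, slf _⟩
        · exact ⟨b 1, e1, anti _ _ d01, slf _, d12⟩
      · exact ⟨b 0, e0, slf _, d01, d02⟩
    obtain ⟨v, hv, v0, v1, v2⟩ := this
    have hvn : 0 < ‖v‖ := norm_pos_iff.2 hv
    set e : ℂ := (‖v‖⁻¹ : ℝ) • v with he
    have hen : ‖e‖ = 1 := by
      rw [he, norm_smul, norm_inv, norm_norm, inv_mul_cancel₀ hvn.ne']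
    have hce : ∀ z, crs v z = 0 → crs e z = 0 := by
      intro z h
      have : crs e z = ‖v‖⁻¹ * crs v z := by rw [he]; simp [crs]; ring
      rw [this, h, mul_zero]
    obtain ⟨t0, e0⟩ := crs_unit e _ hen (hce _ v0)
    obtain ⟨t1, e1⟩ := crs_unit e _ hen (hce _ v1)
    obtain ⟨t2, e2⟩ := crs_unit e _ hen (hce _ v2)
    have e3 : b 3 = (-(t0 + t1 + t2)) • e := by rw [hb3, e0, e1, e2]; module
    have nn : ∀ t : ℝ, ‖t • e‖ = |t| := by intro t; rw [norm_smul, hen, mul_one, Real.norm_eq_abs]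
    rw [e3, nn] at s3
    rw [e0, nn] at s0
    rw [e1, nn] at s1
    rw [e2, nn] at s2
    rw [e0, e1, ← add_smul, nn] at s01
    rw [e0, e2, ← add_smul, nn] at s02
    rw [e1, e2, ← add_smul, nn] at s12
    rw [e0, e1, e2, e3, nn, nn, nn, nn]
    rw [abs_le] at s01 s02 s12 s0 s1 s2 s3
    obtain ⟨_, _⟩ := s01
    obtain ⟨_, _⟩ := s02
    obtain ⟨_, _⟩ := s12
    obtain ⟨_, _⟩ := s0
    obtain ⟨_, _⟩ := s1
    obtain ⟨_, _⟩ := s2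
    obtain ⟨_, _⟩ := s3
    rcases abs_cases t0 with ⟨g0, _⟩ | ⟨g0, _⟩ <;> rcases abs_cases t1 with ⟨g1, _⟩ | ⟨g1, _⟩ <;>
    rcases abs_cases t2 with ⟨g2, _⟩ | ⟨g2, _⟩ <;>
    rcases abs_cases (-(t0 + t1 + t2)) with ⟨g3, _⟩ | ⟨g3, _⟩ <;> rw [g0, g1, g2, g3] <;> linarith
  · set x := crs (b 0) (b 1) with hx
    set y := crs (b 2) (b 3) with hy
    set z := crs (b 1) (b 2) with hz
    set w := crs (b 3) (b 0) with hw
    have hpos2 : 0 < z + w := by linarith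
    have hq := quad 0 (b 0) (b 0 + b 1) (b 0 + b 1 + b 2) ((w / (z + w)) • (b 0 + b 1))
      (by rw [zero_sub, norm_neg]; exact s0)
      (by rw [show b 0 - (b 0 + b 1) = -b 1 by ring, norm_neg]; exact s1)
      (by rw [show b 0 + b 1 - (b 0 + b 1 + b 2) = -b 2 by ring, norm_neg]; exact s2)
      (by rw [sub_zero, ← norm_neg, ← hb3]; exact s3)
      (by rw [zero_sub, norm_neg]; exact s01)
      (by rw [show b 0 - (b 0 + b 1 + b 2) = -(b 1 + b 2) by ring, norm_neg]; exact s12)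
      ⟨z / (z + w), w / (z + w), by positivity, by positivity, by field_simp, by simp⟩
      (by
        refine ⟨y / (x + y), x / (x + y), by positivity, by positivity, ?_, ?_⟩
        · rw [← add_div, add_comm y x, div_self hpos.ne']
        · rw [← hsum]
          have : y • b 0 + x • (b 0 + b 1 + b 2) = w • (b 0 + b 1) := by
            rw [hx, hy, hw, hb3]
            apply Complex.ext
            · simp [crs]; ring
            · simp [crs]; ring
          rw [div_eq_inv_mul, div_eq_inv_mul, div_eq_inv_mul, mul_smul, mul_smul, mul_smul,
            ← smul_add, this])
    rw [zero_sub, norm_neg, show b 0 - (b 0 + b 1) = -b 1 by ring, norm_neg,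
      show b 0 + b 1 - (b 0 + b 1 + b 2) = -b 2 by ring, norm_neg, sub_zero,
      show b 0 + b 1 + b 2 = - b 3 by rw [hb3]; ring, norm_neg] at hq
    exact hq

lemma geo (b : Fin 4 → ℂ) (h0 : ∑ i, b i = 0) (hS : ∀ S : Finset (Fin 4), ‖∑ i ∈ S, b i‖ ≤ 1) :
    ∑ i, ‖b i‖ ≤ 2 + 4 * sin (π / 12) := by
  let area : Equiv.Perm (Fin 4) → ℝ := fun σ =>
    crs (b (σ 0)) (b (σ 1)) + crs (b (σ 0)) (b (σ 2)) + crs (b (σ 1)) (b (σ 2))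
  obtain ⟨σ, hσ⟩ := Finite.exists_max area
  have hsum : ∑ i, b (σ i) = 0 := by rw [Equiv.sum_comp σ b]; exact h0
  have hb3 : b (σ 3) = -(b (σ 0) + b (σ 1) + b (σ 2)) := by
    rw [Fin.sum_univ_four] at hsum
    linear_combination hsum
  have k01 := hσ (σ * Equiv.swap 0 1)
  have k12 := hσ (σ * Equiv.swap 1 2)
  have k23 := hσ (σ * Equiv.swap 2 3)
  have k30 := hσ (σ * Equiv.swap 3 0)
  have q1 : (Equiv.swap (0:Fin 4) 1) 2 = 2 := by decide
  have q2 : (Equiv.swap (1:Fin 4) 2) 0 = 0 := by decide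
  have q3 : (Equiv.swap (2:Fin 4) 3) 0 = 0 := by decide
  have q4 : (Equiv.swap (2:Fin 4) 3) 1 = 1 := by decide
  have q5 : (Equiv.swap (3:Fin 4) 0) 1 = 1 := by decide
  have q6 : (Equiv.swap (3:Fin 4) 0) 2 = 2 := by decide
  simp only [area, Equiv.Perm.mul_apply, Equiv.swap_apply_left, Equiv.swap_apply_right,
    q1, q2, q3, q4, q5, q6, hb3] at k01 k12 k23 k30
  have := geo_ord (fun i => b (σ i)) hsum (by
      intro S
      have := hS (S.map σ.toEmbedding)
      rwa [Finset.sum_map] at this)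
    (by simp [crs] at *; linarith) (by simp [crs] at *; linarith)
    (by simp only [hb3]; simp [crs] at *; linarith) (by simp only [hb3]; simp [crs] at *; linarith)
  rwa [Equiv.sum_comp σ (fun i => ‖b i‖)] at this

lemma geo_exists (b : Fin 4 → ℂ) (h0 : ∑ i, b i = 0) : ∃ S : Finset (Fin 4),
    ∑ i, ‖b i‖ ≤ (2 + 4 * sin (π / 12)) * ‖∑ i ∈ S, b i‖ := by
  obtain ⟨S, hS⟩ := Finite.exists_max (fun S : Finset (Fin 4) => ‖∑ i ∈ S, b i‖)
  refine ⟨S, ?_⟩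
  rcases (norm_nonneg (∑ i ∈ S, b i)).eq_or_lt with hz | hp
  · have : ∀ i, ‖b i‖ ≤ 0 := by
      intro i
      have := hS {i}
      rwa [Finset.sum_singleton, ← hz] at this
    rw [← hz, mul_zero]
    exact Finset.sum_nonpos (fun i _ => this i)
  · set d := ‖∑ i ∈ S, b i‖
    have := geo (fun i => d⁻¹ • b i) (by rw [← Finset.smul_sum, h0, smul_zero]) (by
      intro T
      rw [← Finset.smul_sum, norm_smul, norm_inv, Real.norm_of_nonneg hp.le]
      rw [inv_mul_le_iff₀ hp, mul_one]; exact hS T)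
    simp only [norm_smul, norm_inv, Real.norm_of_nonneg hp.le] at this
    rw [← Finset.mul_sum, inv_mul_le_iff₀ hp] at this
    linarith


lemma e2_inner (x y : E2) : ⟪x, y⟫ = x 0 * y 0 + x 1 * y 1 := by
  rw [PiLp.inner_apply, Fin.sum_univ_two]
  simp [mul_comm]

lemma e2_norm_sq (x : E2) : ‖x‖ ^ 2 = x 0 ^ 2 + x 1 ^ 2 := by
  rw [EuclideanSpace.real_norm_sq_eq, Fin.sum_univ_two]

lemma vec2_zero (x y : ℝ) : vec2 x y 0 = x := by simp [vec2]
lemma vec2_one (x y : ℝ) : vec2 x y 1 = y := by simp [vec2]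

/-- the sum of minima. -/
def Nmin {m : ℕ} (a : Fin m → E2) (u v : E2) : ℝ := ∑ j, min (⟪a j, u⟫ ^ 2) (⟪a j, v⟫ ^ 2)

lemma abs_sub_abs_sq (p q : ℝ) : (|p| - |q|) ^ 2 = min ((p - q) ^ 2) ((p + q) ^ 2) := by
  rcases abs_cases p with ⟨h1, h2⟩ | ⟨h1, h2⟩ <;> rcases abs_cases q with ⟨h3, h4⟩ | ⟨h3, h4⟩ <;>
    rw [h1, h3]
  · rw [min_eq_left (by nlinarith)]
  · rw [min_eq_right (by nlinarith)]; ring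
  · rw [min_eq_right (by nlinarith)]; ring
  · rw [min_eq_left (by nlinarith)]; ring

lemma phi_sq {m : ℕ} (a : Fin m → E2) (x y : E2) :
    ‖PhiMap a x - PhiMap a y‖ ^ 2 = Nmin a (x - y) (x + y) := by
  rw [EuclideanSpace.real_norm_sq_eq, Nmin]
  refine Finset.sum_congr rfl fun j _ => ?_
  rw [inner_sub_right, inner_add_right, ← abs_sub_abs_sq]
  simp [PhiMap]

lemma pdist_nonneg (x y : E2) : 0 ≤ pdist x y := le_min (norm_nonneg _) (norm_nonneg _)

lemma pdist_sq (x y : E2) : pdist x y ^ 2 = min (‖x - y‖ ^ 2) (‖x + y‖ ^ 2) := by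
  unfold pdist
  rcases le_total ‖x - y‖ ‖x + y‖ with h | h
  · rw [min_eq_left h, min_eq_left (pow_le_pow_left₀ (norm_nonneg _) h 2)]
  · rw [min_eq_right h, min_eq_right (pow_le_pow_left₀ (norm_nonneg _) h 2)]

lemma hlf_sub (u v : E2) : ((1/2:ℝ) • (u + v)) - ((1/2:ℝ) • (v - u)) = u := by
  module
lemma hlf_add (u v : E2) : ((1/2:ℝ) • (u + v)) + ((1/2:ℝ) • (v - u)) = v := by
  module

/-- Elements of the ratio set, squared. -/
lemma ratio_mem_iff {m : ℕ} (a : Fin m → E2) (r : ℝ) : r ∈ ratioSet a ↔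
    0 ≤ r ∧ ∃ u v : E2, u ≠ 0 ∧ v ≠ 0 ∧ r ^ 2 * min (‖u‖ ^ 2) (‖v‖ ^ 2) = Nmin a u v := by
  constructor
  · rintro ⟨x, y, h, rfl⟩
    refine ⟨div_nonneg (norm_nonneg _) (pdist_nonneg _ _), x - y, x + y, ?_, ?_, ?_⟩
    · intro h0; apply h; simp [pdist, h0]
    · intro h0; apply h; simp [pdist, h0]
    · rw [← pdist_sq, ← phi_sq, div_pow, div_mul_cancel₀ _ (pow_ne_zero 2 h)]
  · rintro ⟨hr, u, v, hu, hv, h⟩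
    have hs := hlf_sub u v
    have ha := hlf_add u v
    refine ⟨(1/2:ℝ) • (u + v), (1/2:ℝ) • (v - u), ?_, ?_⟩
    · rw [pdist, hs, ha]
      exact (lt_min (norm_pos_iff.2 hu) (norm_pos_iff.2 hv)).ne'
    · have hp : 0 < pdist ((1/2:ℝ) • (u + v)) ((1/2:ℝ) • (v - u)) := by
        rw [pdist, hs, ha]
        exact (lt_min (norm_pos_iff.2 hu) (norm_pos_iff.2 hv))
      rw [eq_div_iff hp.ne']
      have h2 := phi_sq a ((1/2:ℝ) • (u + v)) ((1/2:ℝ) • (v - u))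
      have h3 := pdist_sq ((1/2:ℝ) • (u + v)) ((1/2:ℝ) • (v - u))
      rw [hs, ha] at h2 h3
      rw [← h, ← h3, ← mul_pow] at h2
      exact ((sq_eq_sq₀ (norm_nonneg _) (mul_nonneg hr hp.le)).1 h2).symm

lemma Nmin_nonneg {m : ℕ} (a : Fin m → E2) (u v : E2) : 0 ≤ Nmin a u v :=
  Finset.sum_nonneg fun _ _ => le_min (sq_nonneg _) (sq_nonneg _)

lemma ratio_exists {m : ℕ} (a : Fin m → E2) (u v : E2) (hu : u ≠ 0) (hv : v ≠ 0) :
    ∃ r ∈ ratioSet a, r ^ 2 * min (‖u‖ ^ 2) (‖v‖ ^ 2) = Nmin a u v := by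
  have hp : 0 < min (‖u‖ ^ 2) (‖v‖ ^ 2) :=
    lt_min (pow_pos (norm_pos_iff.2 hu) 2) (pow_pos (norm_pos_iff.2 hv) 2)
  have : √(Nmin a u v / min (‖u‖ ^ 2) (‖v‖ ^ 2)) ^ 2 * min (‖u‖ ^ 2) (‖v‖ ^ 2) = Nmin a u v := by
    rw [Real.sq_sqrt (div_nonneg (Nmin_nonneg _ _ _) hp.le), div_mul_cancel₀ _ hp.ne']
  exact ⟨_, (ratio_mem_iff a _).2 ⟨Real.sqrt_nonneg _, u, v, hu, hv, this⟩, this⟩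

lemma ratio_nonneg {m : ℕ} (a : Fin m → E2) (r : ℝ) (h : r ∈ ratioSet a) : 0 ≤ r :=
  ((ratio_mem_iff a r).1 h).1

lemma ratio_bddBelow {m : ℕ} (a : Fin m → E2) : BddBelow (ratioSet a) :=
  ⟨0, fun r h => ratio_nonneg a r h⟩

lemma Nmin_le_left {m : ℕ} (a : Fin m → E2) (u v : E2) : Nmin a u v ≤ ∑ j, ⟪a j, u⟫ ^ 2 :=
  Finset.sum_le_sum fun _ _ => min_le_left _ _
lemma Nmin_le_right {m : ℕ} (a : Fin m → E2) (u v : E2) : Nmin a u v ≤ ∑ j, ⟪a j, v⟫ ^ 2 :=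
  Finset.sum_le_sum fun _ _ => min_le_right _ _

lemma frame_le {m : ℕ} (a : Fin m → E2) (u : E2) :
    ∑ j, ⟪a j, u⟫ ^ 2 ≤ (∑ j, ‖a j‖ ^ 2) * ‖u‖ ^ 2 := by
  rw [Finset.sum_mul]
  refine Finset.sum_le_sum fun j _ => ?_
  rw [← mul_pow, ← sq_abs]
  exact pow_le_pow_left₀ (abs_nonneg _) (abs_real_inner_le_norm _ _) 2

/-- Upper bounds from frame upper bounds. -/
lemma ratio_upper {m : ℕ} (a : Fin m → E2) (B : ℝ)
    (h : ∀ u : E2, ∑ j, ⟪a j, u⟫ ^ 2 ≤ B * ‖u‖ ^ 2) (r : ℝ) (hr : r ∈ ratioSet a) : r ≤ √B := by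
  obtain ⟨h0, u, v, hu, hv, e⟩ := (ratio_mem_iff a r).1 hr
  apply Real.le_sqrt_of_sq_le
  have hu' := pow_pos (norm_pos_iff.2 hu) 2
  have hv' := pow_pos (norm_pos_iff.2 hv) 2
  rcases le_total (‖u‖ ^ 2) (‖v‖ ^ 2) with hh | hh
  · rw [min_eq_left hh] at e
    have := (Nmin_le_left a u v).trans (h u)
    rw [← e] at this
    exact le_of_mul_le_mul_right this hu'
  · rw [min_eq_right hh] at e
    have := (Nmin_le_right a u v).trans (h v)
    rw [← e] at this
    exact le_of_mul_le_mul_right this hv'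

lemma ratio_bddAbove {m : ℕ} (a : Fin m → E2) : BddAbove (ratioSet a) :=
  ⟨_, fun r hr => ratio_upper a _ (frame_le a) r hr⟩

lemma lipL_nonneg {m : ℕ} (a : Fin m → E2) : 0 ≤ lipL a :=
  Real.sInf_nonneg fun r h => ratio_nonneg a r h

lemma lipL_le {m : ℕ} (a : Fin m → E2) (u v : E2) :
    lipL a ^ 2 * min (‖u‖ ^ 2) (‖v‖ ^ 2) ≤ Nmin a u v := by
  by_cases hu : u = 0
  · subst hu
    have := Nmin_nonneg a 0 v
    rw [min_eq_left (by simp)]; simpa using this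
  by_cases hv : v = 0
  · subst hv
    have := Nmin_nonneg a u 0
    rw [min_eq_right (by simp)]; simpa using this
  obtain ⟨r, hr, e⟩ := ratio_exists a u v hu hv
  rw [← e]
  have h1 : lipL a ≤ r := csInf_le (ratio_bddBelow a) hr
  have := lipL_nonneg a
  gcongr

lemma lipU_nonneg {m : ℕ} (a : Fin m → E2) : 0 ≤ lipU a :=
  Real.sSup_nonneg fun r h => ratio_nonneg a r h

lemma lipU_ge {m : ℕ} (a : Fin m → E2) (u : E2) :
    ∑ j, ⟪a j, u⟫ ^ 2 ≤ lipU a ^ 2 * ‖u‖ ^ 2 := by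
  by_cases hu : u = 0
  · subst hu; simp
  obtain ⟨r, hr, e⟩ := ratio_exists a u u hu hu
  have h1 : r ≤ lipU a := le_csSup (ratio_bddAbove a) hr
  have h0 := ratio_nonneg a r hr
  rw [min_self] at e
  have e2 : Nmin a u u = ∑ j, ⟪a j, u⟫ ^ 2 := by simp [Nmin]
  rw [← e2, ← e]
  gcongr

/-- Squared row as a complex number. -/
def bz (a : E2) : ℂ := ⟨a 0 ^ 2 - a 1 ^ 2, 2 * a 0 * a 1⟩

lemma bz_norm (a : E2) : ‖bz a‖ = a 0 ^ 2 + a 1 ^ 2 := by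
  rw [Complex.norm_eq_sqrt_sq_add_sq]
  rw [show (bz a).re ^ 2 + (bz a).im ^ 2 = (a 0 ^ 2 + a 1 ^ 2) ^ 2 by simp [bz]; ring]
  exact Real.sqrt_sq (by positivity)

lemma inner_sq_bz (a u : E2) :
    2 * ⟪a, u⟫ ^ 2 = ‖bz a‖ * ‖u‖ ^ 2 + (bz a * (starRingEnd ℂ) (bz u)).re := by
  rw [e2_inner, bz_norm, e2_norm_sq]
  simp [bz]; ring

lemma sum_inner_sq {m : ℕ} (a : Fin m → E2) (S : Finset (Fin m)) (u : E2) :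
    2 * ∑ j ∈ S, ⟪a j, u⟫ ^ 2 = (∑ j ∈ S, ‖bz (a j)‖) * ‖u‖ ^ 2
      + ((∑ j ∈ S, bz (a j)) * (starRingEnd ℂ) (bz u)).re := by
  rw [Finset.mul_sum, Finset.sum_mul, Finset.sum_mul, Complex.re_sum, ← Finset.sum_add_distrib]
  exact Finset.sum_congr rfl fun j _ => inner_sq_bz _ _

lemma bz_norm' (u : E2) : ‖bz u‖ = ‖u‖ ^ 2 := by rw [bz_norm, e2_norm_sq]

lemma tight_frame {m : ℕ} (a : Fin m → E2) (h0 : ∑ j, bz (a j) = 0) (u : E2) :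
    ∑ j, ⟪a j, u⟫ ^ 2 = (∑ j, ‖bz (a j)‖) / 2 * ‖u‖ ^ 2 := by
  have := sum_inner_sq a Finset.univ u
  rw [h0] at this; simp at this; linarith

lemma bz_surj (w : ℂ) : ∃ u : E2, bz u = w := by
  obtain ⟨z, hz⟩ := IsSquare.exists_sq w (IsAlgClosed.exists_pow_nat_eq w (n := 2) (by norm_num)
    |>.elim fun z hz => ⟨z, by rw [← hz, sq]⟩)
  refine ⟨vec2 z.re z.im, ?_⟩
  rw [hz]
  apply Complex.ext <;> simp [bz, vec2_zero, vec2_one, sq]; ring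

lemma sum_compl_bz {m : ℕ} (b : Fin m → ℂ) (h0 : ∑ j, b j = 0) (S : Finset (Fin m)) :
    ∑ j ∈ Sᶜ, b j = - ∑ j ∈ S, b j := by
  have := Finset.sum_add_sum_compl S b
  rw [h0] at this; linear_combination this

lemma Nmin_le_split {m : ℕ} (a : Fin m → E2) (S : Finset (Fin m)) (u v : E2) :
    Nmin a u v ≤ ∑ j ∈ S, ⟪a j, u⟫ ^ 2 + ∑ j ∈ Sᶜ, ⟪a j, v⟫ ^ 2 := by
  rw [Nmin, ← Finset.sum_add_sum_compl S]
  gcongr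
  · exact min_le_left _ _
  · exact min_le_right _ _

/-- For a tight family, each subset yields an upper bound for the lower Lipschitz bound. -/
lemma tight_upper {m : ℕ} (a : Fin m → E2) (h0 : ∑ j, bz (a j) = 0) (S : Finset (Fin m)) :
    ∃ u v : E2, ‖u‖ ^ 2 = 1 ∧ ‖v‖ ^ 2 = 1 ∧
      Nmin a u v ≤ (∑ j, ‖bz (a j)‖) / 2 - ‖∑ j ∈ S, bz (a j)‖ := by
  set B := ∑ j ∈ S, bz (a j) with hB
  obtain ⟨w, hw, hBw⟩ : ∃ w : ℂ, ‖w‖ = 1 ∧ (B * (starRingEnd ℂ) w).re = -‖B‖ := by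
    by_cases hB0 : B = 0
    · exact ⟨1, by simp, by simp [hB0]⟩
    · have hn : ‖B‖ ≠ 0 := norm_ne_zero_iff.2 hB0
      refine ⟨-(B / ‖B‖), ?_, ?_⟩
      · simp [hn]
      · rw [map_neg, map_div₀, Complex.conj_ofReal, mul_neg, mul_div_assoc', Complex.mul_conj,
          Complex.normSq_eq_norm_sq, ← Complex.ofReal_div, Complex.neg_re, Complex.ofReal_re]
        field_simp
  obtain ⟨u, hu⟩ := bz_surj w
  obtain ⟨v, hv⟩ := bz_surj (-w)
  have hu1 : ‖u‖ ^ 2 = 1 := by rw [← bz_norm', hu, hw]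
  have hv1 : ‖v‖ ^ 2 = 1 := by rw [← bz_norm', hv, norm_neg, hw]
  refine ⟨u, v, hu1, hv1, ?_⟩
  have h1 := sum_inner_sq a S u
  have h2 := sum_inner_sq a Sᶜ v
  have h3 := Finset.sum_add_sum_compl S (fun j => ‖bz (a j)‖)
  rw [sum_compl_bz _ h0, ← hB, hv, map_neg, neg_mul_neg, hBw, hv1] at h2
  rw [← hB, hu, hBw, hu1] at h1
  have := Nmin_le_split a S u v
  linarith

lemma tight_lower {m : ℕ} (a : Fin m → E2) (h0 : ∑ j, bz (a j) = 0) (D : ℝ)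
    (hD : ∀ S : Finset (Fin m), ‖∑ j ∈ S, bz (a j)‖ ≤ D) (u v : E2) :
    ((∑ j, ‖bz (a j)‖) / 2 - D) * min (‖u‖ ^ 2) (‖v‖ ^ 2) ≤ Nmin a u v := by
  classical
  set S := Finset.univ.filter (fun j => ⟪a j, u⟫ ^ 2 ≤ ⟪a j, v⟫ ^ 2) with hS
  have e : Nmin a u v = ∑ j ∈ S, ⟪a j, u⟫ ^ 2 + ∑ j ∈ Sᶜ, ⟪a j, v⟫ ^ 2 := by
    rw [Nmin, ← Finset.sum_add_sum_compl S]
    congr 1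
    · refine Finset.sum_congr rfl fun j hj => min_eq_left ?_
      simpa [hS] using hj
    · refine Finset.sum_congr rfl fun j hj => min_eq_right ?_
      have : ⟪a j, v⟫ ^ 2 < ⟪a j, u⟫ ^ 2 := by simpa [hS] using hj
      exact this.le
  have h1 := sum_inner_sq a S u
  have h2 := sum_inner_sq a Sᶜ v
  have h3 := Finset.sum_add_sum_compl S (fun j => ‖bz (a j)‖)
  have key : ∀ (T : Finset (Fin m)) (z : E2),
      -(‖∑ j ∈ T, bz (a j)‖ * ‖z‖ ^ 2) ≤ ((∑ j ∈ T, bz (a j)) * (starRingEnd ℂ) (bz z)).re := by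
    intro T z
    have := Complex.abs_re_le_norm ((∑ j ∈ T, bz (a j)) * (starRingEnd ℂ) (bz z))
    rw [norm_mul, Complex.norm_conj, bz_norm'] at this
    exact (abs_le.1 this).1
  have k1 := key S u
  have k2 := key Sᶜ v
  have t : ∀ T : Finset (Fin m), ‖∑ j ∈ T, bz (a j)‖ ≤ ∑ j ∈ T, ‖bz (a j)‖ :=
    fun T => norm_sum_le _ _
  have tS := t S
  have tC := t Sᶜ
  have dS := hD S
  have eC : ‖∑ j ∈ Sᶜ, bz (a j)‖ = ‖∑ j ∈ S, bz (a j)‖ := by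
    rw [sum_compl_bz _ h0, norm_neg]
  rw [eC] at k2 tC
  have m1 := min_le_left (‖u‖ ^ 2) (‖v‖ ^ 2)
  have m2 := min_le_right (‖u‖ ^ 2) (‖v‖ ^ 2)
  have m0 : 0 ≤ min (‖u‖ ^ 2) (‖v‖ ^ 2) := by positivity
  rw [e, ← h3]
  generalize min (‖u‖ ^ 2) (‖v‖ ^ 2) = μ at *
  have q1 := mul_le_mul_of_nonneg_left m1 (sub_nonneg.2 tS)
  have q2 := mul_le_mul_of_nonneg_left m2 (sub_nonneg.2 tC)
  have q3 := mul_le_mul_of_nonneg_right dS m0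
  nlinarith

lemma tight_cond {m : ℕ} (a : Fin m → E2) (h0 : ∑ j, bz (a j) = 0) (P D : ℝ)
    (hP : ∑ j, ‖bz (a j)‖ = P) (hD : ∀ S : Finset (Fin m), ‖∑ j ∈ S, bz (a j)‖ ≤ D)
    (S : Finset (Fin m)) (hS : ‖∑ j ∈ S, bz (a j)‖ = D) (hPD : 2 * D < P) :
    condNum a = ENNReal.ofReal (√(P / (P - 2 * D))) := by
  have hL : lipL a = √(P / 2 - D) := by
    have hpos : 0 ≤ P / 2 - D := by linarith
    obtain ⟨u, v, hu, hv, h⟩ := tight_upper a h0 S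
    have hle := lipL_le a u v
    rw [hu, hv, min_self, mul_one] at hle
    apply le_antisymm
    · apply Real.le_sqrt_of_sq_le
      rw [← hP, ← hS]; exact hle.trans h
    · have hu0 : u ≠ 0 := by rintro rfl; simp at hu
      obtain ⟨r, hr, -⟩ := ratio_exists a u u hu0 hu0
      refine le_csInf ⟨r, hr⟩ ?_
      intro r hr
      obtain ⟨hr0, u, v, hu, hv, e⟩ := (ratio_mem_iff a r).1 hr
      have := tight_lower a h0 D hD u v
      rw [hP, ← e] at this
      have hp : 0 < min (‖u‖ ^ 2) (‖v‖ ^ 2) :=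
        lt_min (pow_pos (norm_pos_iff.2 hu) 2) (pow_pos (norm_pos_iff.2 hv) 2)
      exact Real.sqrt_le_iff.2 ⟨hr0, le_of_mul_le_mul_right this hp⟩
  have hU : lipU a = √(P / 2) := by
    obtain ⟨u, v, hu, hv, h⟩ := tight_upper a h0 S
    have hu0 : u ≠ 0 := by rintro rfl; simp at hu
    obtain ⟨r, hr, -⟩ := ratio_exists a u u hu0 hu0
    apply le_antisymm
    · refine csSup_le ⟨r, hr⟩ ?_
      refine ratio_upper a _ fun z => ?_
      rw [tight_frame a h0, hP]
    · have := lipU_ge a u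
      rw [tight_frame a h0, hP, hu, mul_one, mul_one] at this
      exact Real.sqrt_le_iff.2 ⟨lipU_nonneg a, this⟩
  have hpos : 0 < P / 2 - D := by linarith
  rw [condNum, if_neg (by rw [hL]; exact (Real.sqrt_pos.2 hpos).ne'), hL, hU,
    ← Real.sqrt_div' _ hpos.le]
  congr 2
  have : P - 2 * D ≠ 0 := by linarith
  field_simp


lemma K_sq : (√(1 + √2 / 2 + √6 / 2)) ^ 2 * (4 * sin (π / 12)) = 2 + 4 * sin (π / 12) := by
  rw [Real.sq_sqrt (by positivity), sin12]
  have h2 : √2 ^ 2 = 2 := Real.sq_sqrt (by norm_num)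
  have h6 : √6 ^ 2 = 6 := Real.sq_sqrt (by norm_num)
  nlinarith

lemma sum_ite_four (b : Fin 4 → ℂ) (S : Finset (Fin 4)) :
    ∑ j ∈ S, b j = (if 0 ∈ S then b 0 else 0) + (if 1 ∈ S then b 1 else 0)
      + (if 2 ∈ S then b 2 else 0) + (if 3 ∈ S then b 3 else 0) := by
  rw [← Fin.sum_univ_four (fun j => if j ∈ S then b j else 0), Finset.sum_ite_mem,
    Finset.univ_inter]

lemma norm_le_of_sq (z : ℂ) (D : ℝ) (hD : 0 ≤ D) (h : z.re ^ 2 + z.im ^ 2 ≤ D ^ 2) : ‖z‖ ≤ D := by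
  rw [Complex.norm_eq_sqrt_sq_add_sq]
  exact Real.sqrt_le_iff.2 ⟨hD, h⟩

lemma harm_cond : condNum (harmonicFrame 4) = ENNReal.ofReal (√(2 + √2)) := by
  have h2 : √2 ^ 2 = 2 := Real.sq_sqrt (by norm_num)
  have h2p : 0 < √2 := by positivity
  have h2u : √2 < 2 := by nlinarith
  have b0 : bz (harmonicFrame 4 0) = ⟨1, 0⟩ := by
    simp [bz, harmonicFrame, vec2_zero, vec2_one]
  have b1 : bz (harmonicFrame 4 1) = ⟨0, 1⟩ := by
    simp [bz, harmonicFrame, vec2_zero, vec2_one]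
    linarith
  have b2 : bz (harmonicFrame 4 2) = ⟨-1, 0⟩ := by
    have : 2 * π / 4 = π / 2 := by ring
    simp [bz, harmonicFrame, vec2_zero, vec2_one, this]
  have b3 : bz (harmonicFrame 4 3) = ⟨0, -1⟩ := by
    have : 3 * π / 4 = π - π / 4 := by ring
    simp [bz, harmonicFrame, vec2_zero, vec2_one, this]
    linarith
  rw [tight_cond (harmonicFrame 4) ?_ 4 (√2) ?_ ?_ {0, 1} ?_ (by linarith)]
  · congr 2
    have : 4 - 2 * √2 ≠ 0 := by linarith
    rw [div_eq_iff this]; nlinarith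
  · rw [Fin.sum_univ_four, b0, b1, b2, b3]; apply Complex.ext <;> simp
  · rw [Fin.sum_univ_four, b0, b1, b2, b3]
    simp only [Complex.norm_eq_sqrt_sq_add_sq]
    norm_num
  · intro S
    rw [sum_ite_four, b0, b1, b2, b3]
    apply norm_le_of_sq _ _ h2p.le
    rw [h2]
    split_ifs <;> simp <;> norm_num
  · rw [Finset.sum_pair (by decide), b0, b1, Complex.norm_eq_sqrt_sq_add_sq]
    simp; norm_num

lemma bz_polar (r θ : ℝ) : bz (r • vec2 (cos θ) (sin θ)) =
    ⟨r ^ 2 * cos (2 * θ), r ^ 2 * sin (2 * θ)⟩ := by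
  rw [cos_two_mul', sin_two_mul]
  apply Complex.ext <;> simp [bz, vec2_zero, vec2_one] <;> ring

lemma E4'_cond : condNum E4' = ENNReal.ofReal (√(1 + √2 / 2 + √6 / 2)) := by
  set s := sin (π / 12) with hs
  have hs4 : 1 / 4 ≤ s := sin12_ge
  set t := √3 with ht
  have ht2 : t ^ 2 = 3 := Real.sq_sqrt (by norm_num)
  have htp : 0 < t := by positivity
  have ht1 : 1.7 < t := by nlinarith
  have ht3 : t < 1.8 := by nlinarith
  have h2 : √2 ^ 2 = 2 := Real.sq_sqrt (by norm_num)
  have h6 : √6 = √2 * t := by rw [ht, ← Real.sqrt_mul (by norm_num)]; norm_num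
  have hs' : s = (√2 * t - √2) / 4 := by rw [hs, sin12, h6]
  have hsq : √(2 * s) ^ 2 = 2 * s := Real.sq_sqrt (by linarith)
  have b0 : bz (E4' 0) = ⟨1, 0⟩ := by
    simp [bz, E4', vec2_zero, vec2_one]
  have b1 : bz (E4' 1) = ⟨-1/2, -t/2⟩ := by
    have := bz_polar 1 (2 * π / 3)
    rw [one_smul, show 2 * (2 * π / 3) = π / 3 + π by ring, cos_add_pi, sin_add_pi,
      cos_pi_div_three, sin_pi_div_three] at this
    rw [show E4' 1 = vec2 (cos (2 * π / 3)) (sin (2 * π / 3)) from rfl, this]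
    apply Complex.ext <;> simp <;> ring
  have b2 : bz (E4' 2) = ⟨-(t - 1) / 2, (t - 1) / 2⟩ := by
    have := bz_polar (√(2 * s)) (3 * π / 8)
    rw [show 2 * (3 * π / 8) = π - π / 4 by ring, cos_pi_sub, sin_pi_sub,
      cos_pi_div_four, sin_pi_div_four, hsq] at this
    rw [show E4' 2 = √(2 * s) • vec2 (cos (3 * π / 8)) (sin (3 * π / 8)) from rfl, this, hs']
    apply Complex.ext <;> simp <;> nlinarith
  have b3 : bz (E4' 3) = ⟨t / 2 - 1, 1 / 2⟩ := by
    have := bz_polar (√(2 * s)) (7 * π / 24)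
    have e1 : 2 * s * s = 1 - t / 2 := by rw [hs']; nlinarith
    have e2 : 2 * s * cos (π / 12) = 1 / 2 := by
      rw [hs, ← sin_two_mul, show 2 * (π / 12) = π / 6 by ring, sin_pi_div_six]
    rw [show 2 * (7 * π / 24) = π / 12 + π / 2 by ring, cos_add_pi_div_two, sin_add_pi_div_two,
      hsq, e2, ← hs, mul_neg, e1] at this
    rw [show E4' 3 = √(2 * s) • vec2 (cos (7 * π / 24)) (sin (7 * π / 24)) from rfl, this]
    apply Complex.ext <;> simp
  have n2 : ∀ z : ℂ, z.re ^ 2 + z.im ^ 2 = (2 * s) ^ 2 → ‖z‖ = 2 * s := by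
    intro z hz
    rw [Complex.norm_eq_sqrt_sq_add_sq, hz, Real.sqrt_sq (by linarith)]
  have s2 : (2 * s) ^ 2 = 2 - t := by rw [hs']; nlinarith
  rw [tight_cond E4' ?_ (2 + 4 * s) 1 ?_ ?_ {0} ?_ (by linarith)]
  · congr 1
    rw [Real.sqrt_eq_iff_mul_self_eq (div_nonneg (by linarith) (by linarith)) (Real.sqrt_nonneg _)]
    have := K_sq
    rw [← hs] at this
    rw [← sq, div_eq_iff (by linarith : (0:ℝ) < 2 + 4 * s - 2 * 1).ne']
    linarith
  · rw [Fin.sum_univ_four, b0, b1, b2, b3]; apply Complex.ext <;> simp <;> ring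
  · have m0 : ‖bz (E4' 0)‖ = 1 := by rw [b0, Complex.norm_eq_sqrt_sq_add_sq]; simp
    have m1 : ‖bz (E4' 1)‖ = 1 := by
      rw [b1, Complex.norm_eq_sqrt_sq_add_sq, Real.sqrt_eq_one]; simp only; nlinarith
    have m2 : ‖bz (E4' 2)‖ = 2 * s := by
      rw [b2]; apply n2; simp only; nlinarith
    have m3 : ‖bz (E4' 3)‖ = 2 * s := by
      rw [b3]; apply n2; simp only; nlinarith
    rw [Fin.sum_univ_four, m0, m1, m2, m3]; ring
  · intro S
    rw [sum_ite_four, b0, b1, b2, b3]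
    apply norm_le_of_sq _ _ zero_le_one
    split_ifs <;> simp <;> nlinarith
  · rw [Finset.sum_singleton, b0, Complex.norm_eq_sqrt_sq_add_sq]; simp

lemma gen_lower (a : Fin 4 → E2) : ENNReal.ofReal (√(1 + √2 / 2 + √6 / 2)) ≤ condNum a := by
  rw [condNum]
  split_ifs with hL
  · exact le_top
  have hLp : 0 < lipL a := lt_of_le_of_ne (lipL_nonneg a) (Ne.symm hL)
  apply ENNReal.ofReal_le_ofReal
  set L := lipL a with hLdef
  set U := lipU a with hUdef
  have hU0 : 0 ≤ U := lipU_nonneg a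
  set p := ∑ j, a j 0 ^ 2 with hp
  set q := ∑ j, a j 0 * a j 1 with hq
  set r := ∑ j, a j 1 ^ 2 with hr
  -- the quadratic form
  have quadf : ∀ x y : ℝ, ∑ j, (a j 0 * x + a j 1 * y) ^ 2 = p * x ^ 2 + 2 * q * x * y + r * y ^ 2 := by
    intro x y
    rw [hp, hq, hr]
    simp only [Fin.sum_univ_four]; ring
  have posf : ∀ x y : ℝ, L ^ 2 * (x ^ 2 + y ^ 2) ≤ p * x ^ 2 + 2 * q * x * y + r * y ^ 2 := by
    intro x y
    have := lipL_le a (vec2 x y) (vec2 x y)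
    rw [min_self, e2_norm_sq, vec2_zero, vec2_one] at this
    rw [← quadf]
    simpa [Nmin, e2_inner, vec2_zero, vec2_one] using this
  have hLL : 0 < L ^ 2 := by positivity
  have pp : 0 < p := by
    have := posf 1 0
    nlinarith
  have dd : 0 < p * r - q ^ 2 := by
    have := posf (-q) p
    have h1 : 0 < L ^ 2 * ((-q) ^ 2 + p ^ 2) := by positivity
    have h2 : 0 < p * (p * r - q ^ 2) := by nlinarith
    exact (mul_pos_iff_of_pos_left pp).1 h2
  -- transform
  set α := (√p)⁻¹ with hα
  set δ := (√(p * (p * r - q ^ 2)))⁻¹ with hδ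
  have hα2 : p * α ^ 2 = 1 := by
    rw [hα, inv_pow, Real.sq_sqrt pp.le]; exact mul_inv_cancel₀ pp.ne'
  have hδ2 : (p * (p * r - q ^ 2)) * δ ^ 2 = 1 := by
    rw [hδ, inv_pow, Real.sq_sqrt (by positivity)]; exact mul_inv_cancel₀ (by positivity)
  -- T (x, y) = (α x - q δ y, p δ y)
  set T : E2 → E2 := fun u => vec2 (α * u 0 - q * δ * u 1) (p * δ * u 1) with hT
  set c : Fin 4 → E2 := fun j => vec2 (α * a j 0) (-q * δ * a j 0 + p * δ * a j 1) with hc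
  have inn : ∀ j u, ⟪c j, u⟫ = ⟪a j, T u⟫ := by
    intro j u
    simp only [e2_inner, hc, hT, vec2_zero, vec2_one]; ring
  have sumsq : ∀ u : E2, ∑ j, ⟪a j, T u⟫ ^ 2 = ‖u‖ ^ 2 := by
    intro u
    simp only [e2_inner]
    rw [quadf, e2_norm_sq]
    simp only [hT, vec2_zero, vec2_one]
    linear_combination (u 0) ^ 2 * hα2 + (u 1) ^ 2 * hδ2
  have c00 : ∑ j, c j 0 ^ 2 = 1 := by
    have := sumsq (vec2 1 0)
    simp only [← inn] at this
    simpa [e2_inner, e2_norm_sq, vec2_zero, vec2_one] using this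
  have c11 : ∑ j, c j 1 ^ 2 = 1 := by
    have := sumsq (vec2 0 1)
    simp only [← inn] at this
    simpa [e2_inner, e2_norm_sq, vec2_zero, vec2_one] using this
  have c01 : ∑ j, c j 0 * c j 1 = 0 := by
    have := sumsq (vec2 1 1)
    simp only [← inn] at this
    simp [e2_inner, e2_norm_sq, vec2_zero, vec2_one] at this
    simp only [Fin.sum_univ_four] at *
    linarith
  have h0 : ∑ j, bz (c j) = 0 := by
    apply Complex.ext
    · simp only [Complex.re_sum, bz, Complex.zero_re]
      rw [Finset.sum_sub_distrib, c00, c11, sub_self]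
    · simp only [Complex.im_sum, bz, Complex.zero_im, mul_assoc]
      rw [← Finset.mul_sum, c01, mul_zero]
  have hP : ∑ j, ‖bz (c j)‖ = 2 := by
    simp only [bz_norm]
    rw [Finset.sum_add_distrib, c00, c11]; norm_num
  obtain ⟨S, hS⟩ := geo_exists (fun j => bz (c j)) h0
  obtain ⟨u, v, hu, hv, hN⟩ := tight_upper c h0 S
  rw [hP] at hS hN
  have hNe : Nmin c u v = Nmin a (T u) (T v) := by simp only [Nmin, inn]
  have hLN := lipL_le a (T u) (T v)
  rw [← hNe, ← hLdef] at hLN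
  have gu := lipU_ge a (T u)
  have gv := lipU_ge a (T v)
  rw [sumsq, hu, ← hUdef] at gu
  rw [sumsq, hv, ← hUdef] at gv
  set μ := min (‖T u‖ ^ 2) (‖T v‖ ^ 2) with hμ
  have gμ : 1 ≤ U ^ 2 * μ := by
    rcases min_choice (‖T u‖ ^ 2) (‖T v‖ ^ 2) with h | h <;> rw [hμ, h] <;> assumption
  set d := ‖∑ j ∈ S, bz (c j)‖ with hd
  have hs4 := sin12_ge
  have hK := K_sq
  set s := sin (π / 12) with hs
  set K := √(1 + √2 / 2 + √6 / 2) with hKd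
  have hK0 : 0 ≤ K := Real.sqrt_nonneg _
  -- L² ≤ U² (1 - d), and 2 ≤ (2+4s) d
  have k1 : L ^ 2 ≤ U ^ 2 * (1 - d) := by
    have e1 : L ^ 2 * μ ≤ 1 - d := by linarith
    have e2 : U ^ 2 * (L ^ 2 * μ) ≤ U ^ 2 * (1 - d) := by gcongr
    nlinarith
  have k2 : (2 + 4 * s) * (1 - d) ≤ 4 * s := by linarith
  have k3 : (2 + 4 * s) * L ^ 2 ≤ U ^ 2 * (4 * s) := by
    have := mul_le_mul_of_nonneg_left k1 (show 0 ≤ 2 + 4 * s by linarith)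
    have := mul_le_mul_of_nonneg_left k2 (sq_nonneg U)
    linarith
  have k4 : (K * L) ^ 2 ≤ U ^ 2 := by
    rw [← hK] at k3
    have : (4 * s) * (K * L) ^ 2 ≤ (4 * s) * U ^ 2 := by linarith
    exact le_of_mul_le_mul_left this (by linarith)
  rw [le_div_iff₀ hLp]
  exact (sq_le_sq₀ (by positivity) hU0).1 k4


/-- `β_{E_4'} = min_M β_M = √(1 + √2/2 + √6/2)`, while the harmonic frame
`E_4` has `β_{E_4} = √(2 + √2) > β_{E_4'}`. -/
theorem stmt11 :
    condNum E4' = ⨅ M : Fin 4 → E2, condNum M ∧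
    condNum E4' = ENNReal.ofReal (Real.sqrt (1 + Real.sqrt 2 / 2 + Real.sqrt 6 / 2)) ∧
    condNum (harmonicFrame 4) = ENNReal.ofReal (Real.sqrt (2 + Real.sqrt 2)) ∧
    condNum E4' < condNum (harmonicFrame 4) := by
  refine ⟨le_antisymm (le_iInf fun M => ?_) (iInf_le _ _), E4'_cond, harm_cond, ?_⟩
  · rw [E4'_cond]; exact gen_lower M
  · rw [E4'_cond, harm_cond]
    rw [ENNReal.ofReal_lt_ofReal_iff (by positivity)]
    apply Real.sqrt_lt_sqrt (by positivity)
    have h2 : √2 ^ 2 = 2 := Real.sq_sqrt (by norm_num)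
    have h2p : 0 < √2 := by positivity
    have h6 : √6 < 2 + √2 := by
      rw [Real.sqrt_lt' (by positivity)]; nlinarith
    linarith
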